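/- arXiv:2201.03880 — 2 statements merged into one kernel-verified Lean document; each statement's English description precedes it below -/
import Mathlib

section
/- Let k and w be natural numbers and let G be a graph that has a Hamiltonian path. If G admits a tree representation of width less than k that has a node of weight at most w, then |G| ≤ (k+1)^(w+1) − 1. -/
open SimpleGraph Real

/-- `G` has a (not necessarily induced) path on `n` vertices. -/
def HasPathOfOrder {V : Type*} (G : SimpleGraph V) (n : ℕ) : Prop :=
  ∃ (u v : V) (p : G.Walk u v), p.IsPath ∧ p.length + 1 = n

/-- `G` has a Hamiltonian path. -/
def HasHamPath {V : Type*} (G : SimpleGraph V) : Prop :=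
  ∃ (u v : V) (p : G.Walk u v), p.IsPath ∧ ∀ w, w ∈ p.support

/-- `G` has an induced path on at least `r` vertices (an induced subgraph isomorphic to a
path graph on `m ≥ r` vertices). -/
def HasInducedPathGE {V : Type*} (G : SimpleGraph V) (r : ℝ) : Prop :=
  ∃ m : ℕ, r ≤ (m : ℝ) ∧ Nonempty (pathGraph m ↪g G)

/-- A tree (or path) representation of `G` over the graph `T`: every vertex `v` of `G` has a
nonempty connected model `model v ⊆ V(T)`, and models of adjacent vertices intersect. -/
structure TreeRep {V N : Type*} (G : SimpleGraph V) (T : SimpleGraph N) where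
  model : V → Set N
  model_connected : ∀ v, (T.induce (model v)).Connected
  adj_meet : ∀ ⦃u v⦄, G.Adj u v → (model u ∩ model v).Nonempty

namespace TreeRep

variable {V N : Type*} {G : SimpleGraph V} {T : SimpleGraph N}

/-- The bag of the representation at a node `t`. -/
def bag (R : TreeRep G T) (t : N) : Set V := {v | t ∈ R.model v}

/-- The representation has width less than `k`, i.e. all bags have at most `k` vertices. -/
def WidthLT (R : TreeRep G T) (k : ℕ) : Prop := ∀ t, (R.bag t).ncard ≤ k

/-- The representation has width at most `k`, i.e. all bags have at most `k + 1` vertices. -/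
def WidthLE (R : TreeRep G T) (k : ℕ) : Prop := ∀ t, (R.bag t).ncard ≤ k + 1

/-- The weight of a path `p` of `T`: the number of vertices of `G` whose model meets `p`. -/
noncomputable def pathWeight (R : TreeRep G T) {x y : N} (p : T.Walk x y) : ℕ :=
  {v : V | ∃ t ∈ p.support, t ∈ R.model v}.ncard

/-- A representation is varied if no bag is contained in the bag at a neighboring node. -/
def Varied (R : TreeRep G T) : Prop := ∀ ⦃t t'⦄, T.Adj t t' → ¬ R.bag t ⊆ R.bag t'

/-- The representation has adhesion less than `a`: the adhesion set of every edge of `T`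
has fewer than `a` vertices. -/
def AdhesionLT (R : TreeRep G T) (a : ℕ) : Prop :=
  ∀ ⦃t t'⦄, T.Adj t t' → (R.bag t ∩ R.bag t').ncard < a

/-- The torso of the representation at a node `t`: the subgraph induced on the bag at `t`
together with all edges inside adhesion sets of edges of `T` incident to `t`. -/
def torso (R : TreeRep G T) (t : N) : SimpleGraph (R.bag t) :=
  SimpleGraph.fromRel (fun u v =>
    G.Adj u v ∨ ∃ t', T.Adj t t' ∧ (u : V) ∈ R.bag t' ∧ (v : V) ∈ R.bag t')

end TreeRep

/-- `G` has pathwidth less than `k`: it has a representation over a path all of whose bags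
have at most `k` vertices. -/
def PathwidthLT {V : Type*} (G : SimpleGraph V) (k : ℕ) : Prop :=
  ∃ (m : ℕ) (R : TreeRep G (pathGraph (m + 1))), R.WidthLT k

/-- `G` has treewidth less than `k`: it has a representation over a tree all of whose bags
have at most `k` vertices. -/
def TreewidthLT {V : Type*} (G : SimpleGraph V) (k : ℕ) : Prop :=
  ∃ (N : Type) (_ : Fintype N) (T : SimpleGraph N), T.IsTree ∧
    ∃ R : TreeRep G T, R.WidthLT k

/-- `G` has treewidth at most `k`. -/
def TreewidthLE {V : Type*} (G : SimpleGraph V) (k : ℕ) : Prop :=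
  ∃ (N : Type) (_ : Fintype N) (T : SimpleGraph N), T.IsTree ∧
    ∃ R : TreeRep G T, R.WidthLE k

/-- A leaf of a graph: a vertex with at most one neighbor. -/
def IsLeafNode {N : Type*} (T : SimpleGraph N) (l : N) : Prop :=
  (T.neighborSet l).Subsingleton

/-- `H` is obtained from `G` by a sequence of edge contractions: there is a surjection
from `V(G)` onto `V(H)` with connected fibers inducing the adjacency of `H`. -/
def IsContraction {W V : Type*} (H : SimpleGraph W) (G : SimpleGraph V) : Prop :=
  ∃ f : V → W, Function.Surjective f ∧
    (∀ w : W, (G.induce (f ⁻¹' {w})).Connected) ∧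
    (∀ x y : W, H.Adj x y ↔ x ≠ y ∧ ∃ u v : V, f u = x ∧ f v = y ∧ G.Adj u v)

/-- `G` is an interval graph: the intersection graph of a family of real intervals. -/
def IsIntervalGraph {V : Type*} (G : SimpleGraph V) : Prop :=
  ∃ l r : V → ℝ, (∀ v, l v ≤ r v) ∧
    ∀ u v : V, G.Adj u v ↔ u ≠ v ∧ max (l u) (l v) ≤ min (r u) (r v)

/-- The internal vertices of a walk: vertices of the walk distinct from its two endpoints. -/
def WalkInternal {V : Type*} {G : SimpleGraph V} {x y : V} (p : G.Walk x y) : Set V :=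
  {w | w ∈ p.support ∧ w ≠ x ∧ w ≠ y}

/-- `H` is a topological minor of `G`: there are branch vertices `φ u` for `u ∈ V(H)` and
internally disjoint paths of `G` joining them, one for each edge of `H`. -/
def IsTopMinor {W V : Type*} (H : SimpleGraph W) (G : SimpleGraph V) : Prop :=
  ∃ (φ : W ↪ V) (P : ∀ ⦃u v : W⦄, H.Adj u v → G.Walk (φ u) (φ v)),
    (∀ ⦃u v⦄ (h : H.Adj u v), (P h).IsPath) ∧
    (∀ ⦃u v⦄ (h : H.Adj u v), P h.symm = (P h).reverse) ∧
    (∀ ⦃u v⦄ (h : H.Adj u v), ∀ w ∈ WalkInternal (P h), w ∉ Set.range φ) ∧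
    (∀ ⦃u v u' v'⦄ (h : H.Adj u v) (h' : H.Adj u' v'), s(u, v) ≠ s(u', v') →
      ∀ w ∈ WalkInternal (P h), w ∉ WalkInternal (P h'))

/-- `H` is (an isomorphic copy of) a subgraph of `G`. -/
def ContainsSubgraphCopy {A B : Type*} (H : SimpleGraph A) (G : SimpleGraph B) : Prop :=
  ∃ f : A ↪ B, ∀ u v : A, H.Adj u v → G.Adj (f u) (f v)

/-- `G` is `k`-degenerate: every (induced) subgraph has a vertex of degree at most `k`. -/
def Degenerate {V : Type*} (G : SimpleGraph V) (k : ℕ) : Prop :=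
  ∀ s : Set V, s.Nonempty → ∃ v ∈ s, {w | w ∈ s ∧ G.Adj v w}.ncard ≤ k

/-- The cycle on `ZMod m` (for `m ≥ 3` this is the cycle graph on `m` vertices). -/
def ringGraph (m : ℕ) : SimpleGraph (ZMod m) :=
  SimpleGraph.fromRel (fun i j => j = i + 1)

/-- Cliquewidth expressions with labels in `Fin k`. -/
inductive CWExpr (k : ℕ) where
  | vertex (l : Fin k) : CWExpr k
  | union (e₁ e₂ : CWExpr k) : CWExpr k
  | addEdges (i j : Fin k) (hij : i ≠ j) (e : CWExpr k) : CWExpr k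
  | relabel (f : Fin k → Fin k) (e : CWExpr k) : CWExpr k

namespace CWExpr

variable {k : ℕ}

/-- The vertex set of the graph described by a cliquewidth expression. -/
def verts : CWExpr k → Type
  | vertex _ => Unit
  | union e₁ e₂ => e₁.verts ⊕ e₂.verts
  | addEdges _ _ _ e => e.verts
  | relabel _ e => e.verts

/-- The labelling of the vertices described by a cliquewidth expression. -/
def label : (e : CWExpr k) → e.verts → Fin k
  | vertex l, _ => l
  | union e₁ _, Sum.inl x => e₁.label x
  | union _ e₂, Sum.inr x => e₂.label x
  | addEdges _ _ _ e, x => e.label x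
  | relabel f e, x => f (e.label x)

/-- The adjacency relation described by a cliquewidth expression. -/
def adj : (e : CWExpr k) → e.verts → e.verts → Prop
  | vertex _, _, _ => False
  | union e₁ _, Sum.inl x, Sum.inl y => e₁.adj x y
  | union _ e₂, Sum.inr x, Sum.inr y => e₂.adj x y
  | union _ _, _, _ => False
  | addEdges i j _ e, x, y =>
      e.adj x y ∨ (e.label x = i ∧ e.label y = j) ∨ (e.label x = j ∧ e.label y = i)
  | relabel _ e, x, y => e.adj x y

/-- The graph described by a cliquewidth expression. -/
def graph (e : CWExpr k) : SimpleGraph e.verts := SimpleGraph.fromRel e.adj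

end CWExpr

/-- `G` has cliquewidth at most `k`: it is isomorphic to the graph of a cliquewidth
expression with at most `k` labels. -/
def CliquewidthLE {V : Type*} (G : SimpleGraph V) (k : ℕ) : Prop :=
  ∃ e : CWExpr k, Nonempty (G ≃g e.graph)

/-- `G` has `(k, Δ)`-almost bounded degree: removing at most `k` vertices yields a graph of
maximum degree at most `Δ`. -/
def AlmostBoundedDegree {V : Type*} (G : SimpleGraph V) (k Δ : ℕ) : Prop :=
  ∃ X : Set V, X.ncard ≤ k ∧ ∀ v ∉ X, {w | w ∉ X ∧ G.Adj v w}.ncard ≤ Δ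

/-- An embedding scheme for `H`: a rotation system (a permutation of the darts that is,
around each vertex, a single cycle on the darts leaving that vertex) together with a
signature on the edges. -/
structure EmbScheme {W : Type*} (H : SimpleGraph W) where
  rot : Equiv.Perm H.Dart
  rot_fst : ∀ d : H.Dart, (rot d).fst = d.fst
  rot_cyclic : ∀ d d' : H.Dart, d.fst = d'.fst → ∃ n : ℕ, (rot ^ n) d = d'
  sign : Sym2 W → Bool

namespace EmbScheme

variable {W : Type*} {H : SimpleGraph W}

/-- The face-tracing step of an embedding scheme, acting on darts with a direction. -/
def faceStep (S : EmbScheme H) : H.Dart × Bool → H.Dart × Bool :=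
  fun p =>
    let s' := xor p.2 (S.sign p.1.edge)
    ((if s' then S.rot.symm p.1.symm else S.rot p.1.symm), s')

/-- The number of orbits of a function. -/
noncomputable def orbitCount {α : Type*} (f : α → α) : ℕ :=
  Nat.card (Quotient (Relation.EqvGen.setoid (fun x y => f x = y)))

/-- The scheme describes an embedding of `H` in a surface of Euler genus at most `g`.
Isolated vertices each bound one face; every other face is traced twice by `faceStep`,
so the number of faces is `orbitCount (faceStep) / 2` plus the number of isolated
vertices, and the Euler genus of the embedding is `2c - |V| + |E| - F`. -/
def GenusLE (S : EmbScheme H) (g : ℕ) : Prop :=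
  2 * Nat.card H.ConnectedComponent + Nat.card H.edgeSet ≤
    g + Nat.card W +
      (orbitCount S.faceStep / 2 + Nat.card {v : W | ∀ w, ¬ H.Adj v w})

/-- The cycle `e 0, e 1, …, e (m-1)` is a facial cycle of the embedding scheme `S`:
its consecutive darts are consecutive in a face traversal. -/
def IsFacialCycle (S : EmbScheme H) {m : ℕ} (e : ZMod m → W)
    (hadj : ∀ x : ZMod m, H.Adj (e x) (e (x + 1))) : Prop :=
  ∃ b : ZMod m → Bool, ∀ x : ZMod m,
    S.faceStep (⟨(e x, e (x + 1)), hadj x⟩, b x) =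
      (⟨(e (x + 1), e (x + 1 + 1)), hadj (x + 1)⟩, b (x + 1))

end EmbScheme

/-- `Hs` has a `C`-vortex of width less than `k`, where `C` is the cycle of `G₀` given by
`e`: the vertices common to `Hs` and `G₀` are exactly those of `C`, and `Hs` has a cycle
representation over `C` in which the model of each vertex of `C` contains that vertex and
every bag has at most `k` vertices. -/
def IsVortex {V : Type*} {G : SimpleGraph V} (Hs G₀ : G.Subgraph) {m : ℕ}
    (e : ZMod m → G₀.verts) (k : ℕ) : Prop :=
  Hs.verts ∩ G₀.verts = Subtype.val '' Set.range e ∧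
  ∃ model : Hs.verts → Set (ZMod m),
    (∀ v, ((ringGraph m).induce (model v)).Connected) ∧
    (∀ (x : ZMod m) (v : Hs.verts), (e x : V) = (v : V) → x ∈ model v) ∧
    (∀ ⦃u v⦄, Hs.coe.Adj u v → (model u ∩ model v).Nonempty) ∧
    (∀ t : ZMod m, {v : Hs.verts | t ∈ model v}.ncard ≤ k)

/-- `G` is `(g, p, a, k)`-almost-embeddable. -/
def AlmostEmbeddable {V : Type*} (G : SimpleGraph V) (g p a k : ℕ) : Prop :=
  ∃ A : Set V, A.ncard ≤ a ∧
  ∃ s : ℕ, s ≤ p ∧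
  ∃ (G₀ : G.Subgraph) (Gv : Fin s → G.Subgraph),
    (G₀ ⊔ ⨆ i, Gv i) = (⊤ : G.Subgraph).deleteVerts A ∧
    (∀ i j, i ≠ j → Disjoint (Gv i).verts (Gv j).verts) ∧
    ∃ S : EmbScheme G₀.coe, S.GenusLE g ∧
    ∃ (m : Fin s → ℕ) (e : ∀ i, ZMod (m i) → G₀.verts)
      (hadj : ∀ i x, G₀.coe.Adj (e i x) (e i (x + 1))),
      (∀ i, 3 ≤ m i) ∧
      (∀ i, Function.Injective (e i)) ∧
      (∀ i, S.IsFacialCycle (e i) (hadj i)) ∧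
      (∀ i j, i ≠ j → Disjoint (Set.range (e i)) (Set.range (e j))) ∧
      (∀ i, IsVortex (Gv i) G₀ (e i) k)

/-!
Root `T` at the node `x` and send each vertex of `G` to the node of its model closest to the root.
Adjacent vertices have intersecting models, so along a Hamiltonian path these nodes spell a word
whose consecutive letters are comparable in the tree-order. A node occurs at most `k` times in the
word, and the letters below a node `l` are contributed by vertices whose models meet the path from
`x` to `l`. The letter `x`, contributed by the bag at `x`, cuts the word into at most `k + 1` pieces
with at most `w` letters below every `l`. Each nonempty piece has a least letter `y` because its
consecutive letters are comparable, and cutting it at `y` lowers the bound `w` by at least one.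
Hence `|G| + 1 ≤ (k + 1) * (k + 1) ^ w`.
-/

open Relation

section Words

variable {α : Type*}

theorem countP_add_count_le_of_sublist [DecidableEq α] {A L : List α} {y : α} {P : α → Bool}
    (hAL : A.Sublist L) (hyA : y ∉ A) (hPy : P y) : A.countP P + L.count y ≤ L.countP P := by
  induction hAL with
  | slnil => simp
  | cons a _ ih => grind
  | cons_cons a _ ih => grind

theorem length_lt_count_add_one_mul [DecidableEq α] {y : α} {K : ℕ} (L : List α)
    (hL : ∀ A, A <:+: L → y ∉ A → A.length < K) : L.length < (L.count y + 1) * K := by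
  by_cases hy : y ∈ L
  · obtain ⟨A, B, rfl, hyA⟩ := List.eq_append_cons_of_mem hy
    have hA : A.length < K := hL A (List.infix_append' [] A _) hyA
    have hB : B.length < (B.count y + 1) * K :=
      length_lt_count_add_one_mul B fun C hC ↦ hL C (hC.trans ⟨A ++ [y], [], by simp⟩)
    calc
      (A ++ y :: B).length = A.length + (B.length + 1) := by
        rw [List.length_append, List.length_cons]
      _ < K + (B.count y + 1) * K := by omega
      _ = ((A ++ y :: B).count y + 1) * K := by
        rw [List.count_append, List.count_cons_self, List.count_eq_zero.2 hyA]
        ring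
  · simpa [List.count_eq_zero.2 hy] using hL L List.infix_rfl hy
termination_by L.length

theorem length_lt_pow_succ_of_forall_infix [DecidableEq α] {r : α → α → Prop} [DecidableRel r]
    [IsTrans α r] {k w : ℕ} {L : List α} {y : α}
    (hk : L.count y ≤ k) (hy : ∀ a ∈ L, r y a) (hw : ∀ l, L.countP (r · l) ≤ w + L.count y)
    (hL : ∀ A, A <:+: L → (∀ l, A.countP (r · l) ≤ w) → A.length < (k + 1) ^ w) :
    L.length < (k + 1) ^ (w + 1) := by
  have hpiece : ∀ A, A <:+: L → y ∉ A → A.length < (k + 1) ^ w := by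
    refine fun A hA hyA ↦ hL A hA fun l ↦ ?_
    by_cases hyl : r y l
    · have := countP_add_count_le_of_sublist (P := (r · l)) hA.sublist hyA (by simpa using hyl)
      have := hw l
      omega
    · have hzero : A.countP (r · l) = 0 := List.countP_eq_zero.2 fun a ha ↦ by
        simpa using fun hal ↦ hyl (trans_of r (hy a (hA.subset ha)) hal)
      omega
  calc L.length < (L.count y + 1) * (k + 1) ^ w := length_lt_count_add_one_mul L hpiece
    _ ≤ (k + 1) * (k + 1) ^ w := by gcongr
    _ = (k + 1) ^ (w + 1) := (pow_succ' _ _).symm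

variable {r : α → α → Prop} [IsPreorder α r]

theorem exists_mem_forall_rel_of_isChain_symmGen (hr : ∀ z, IsChain r {a | r a z}) {L : List α}
    (hL : L.IsChain (SymmGen r)) (hne : L ≠ []) : ∃ y ∈ L, ∀ a ∈ L, r y a := by
  induction L with
  | nil => exact absurd rfl hne
  | cons a L ih =>
    cases L with
    | nil => exact ⟨a, by simp, by simpa using refl_of r a⟩
    | cons b L =>
      rw [List.isChain_cons_cons] at hL
      obtain ⟨y, hyL, hy⟩ := ih hL.2 (by simp)
      have hyb : r y b := hy b (by simp)
      have hya : r y a ∨ r a y := hL.1.elim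
        (fun hab ↦ (hr b).total hyb hab) (fun hba ↦ .inl (trans_of r hyb hba))
      rcases hya with hya | hay
      · exact ⟨y, List.mem_cons_of_mem a hyL, List.forall_mem_cons.2 ⟨hya, hy⟩⟩
      · exact ⟨a, by simp, List.forall_mem_cons.2
          ⟨refl_of r a, fun c hc ↦ trans_of r hay (hy c hc)⟩⟩

variable [DecidableEq α] [DecidableRel r]

theorem length_lt_pow_of_countP_le (hr : ∀ z, IsChain r {a | r a z}) {k w : ℕ} {L : List α}
    (hL : L.IsChain (SymmGen r)) (hk : ∀ a, L.count a ≤ k) (hw : ∀ l, L.countP (r · l) ≤ w) :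
    L.length < (k + 1) ^ w := by
  induction w generalizing L with
  | zero =>
    have hempty : L = [] := List.eq_nil_iff_forall_not_mem.2 fun a ha ↦
      List.countP_eq_zero.1 (Nat.le_zero.1 (hw a)) a ha (by simpa using refl_of r a)
    simp [hempty]
  | succ w ih =>
    rcases eq_or_ne L [] with rfl | hne
    · simp
    obtain ⟨y, hyL, hy⟩ := exists_mem_forall_rel_of_isChain_symmGen hr hL hne
    refine length_lt_pow_succ_of_forall_infix (hk y) hy (fun l ↦ ?_) fun A hA ↦
      ih (hL.infix hA) fun a ↦ (hA.sublist.count_le a).trans (hk a)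
    have := List.count_pos_iff.2 hyL
    have := hw l
    omega

theorem length_lt_pow_succ_of_countP_le_add_count (hr : ∀ z, IsChain r {a | r a z}) {k w : ℕ}
    {L : List α} (hL : L.IsChain (SymmGen r)) (hk : ∀ a, L.count a ≤ k) {y : α}
    (hy : ∀ a ∈ L, r y a) (hw : ∀ l, L.countP (r · l) ≤ w + L.count y) :
    L.length < (k + 1) ^ (w + 1) :=
  length_lt_pow_succ_of_forall_infix (hk y) hy hw fun _ hA ↦
    length_lt_pow_of_countP_le hr (hL.infix hA) fun a ↦ (hA.sublist.count_le a).trans (hk a)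

end Words

section TreeOrder

variable {N : Type*} {T : SimpleGraph N} {x a b : N}

/-- The tree-order of `T` with root `x`: the node `a` lies on the path from `x` to `b`. It is
encoded by asking that `a` lie on every walk from `x` to `b`, which says the same in a tree and is a
preorder in every graph. -/
def TreeLE (T : SimpleGraph N) (x a b : N) : Prop := ∀ p : T.Walk x b, a ∈ p.support

namespace TreeLE

instance isPreorder (T : SimpleGraph N) (x : N) : IsPreorder N (TreeLE T x) where
  refl _ p := p.end_mem_support
  trans _ b _ hab hbc p := by
    classical
    exact p.support_takeUntil_subset_support (hbc p) (hab (p.takeUntil b (hbc p)))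

theorem root_le (T : SimpleGraph N) (x b : N) : TreeLE T x x b := fun p ↦ p.start_mem_support

theorem le_root_iff : TreeLE T x a x ↔ a = x :=
  ⟨fun h ↦ by simpa using h .nil, fun h ↦ h ▸ root_le T a a⟩

theorem iff_mem_support (hT : T.IsAcyclic) {p : T.Walk x b} (hp : p.IsPath) :
    TreeLE T x a b ↔ a ∈ p.support := by
  classical
  refine ⟨fun h ↦ h p, fun ha q ↦ q.support_bypass_subset_support ?_⟩
  have hqp : q.bypass = p :=
    congrArg Subtype.val ((hT.subsingleton_path x b).elim q.toPath ⟨p, hp⟩)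
  rwa [hqp]

theorem isChain_setOf_le (hT : T.IsTree) (x z : N) : IsChain (TreeLE T x) {a | TreeLE T x a z} := by
  classical
  intro a ha b hb _
  obtain ⟨p, hp⟩ := hT.connected.exists_isPath x z
  rw [iff_mem_support hT.isAcyclic (hp.takeUntil (hb p)),
    iff_mem_support hT.isAcyclic (hp.takeUntil (ha p))]
  exact (List.prefix_or_prefix_of_prefix (p.support_takeUntil_prefix_support (ha p))
    (p.support_takeUntil_prefix_support (hb p))).imp
      (fun hab ↦ hab.subset (Walk.end_mem_support _))
      (fun hba ↦ hba.subset (Walk.end_mem_support _))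

theorem symmGen_of_adj (hT : T.IsTree) (x : N) (h : T.Adj a b) : SymmGen (TreeLE T x) a b := by
  obtain ⟨p, hp⟩ := hT.connected.exists_isPath x a
  by_cases hb : b ∈ p.support
  · exact .of_rel_symm ((iff_mem_support hT.isAcyclic hp).2 hb)
  · refine .of_rel ((iff_mem_support hT.isAcyclic (hp.concat hb h)).2 ?_)
    exact p.support_subset_support_concat h p.end_mem_support

theorem exists_le_le_of_walk_induce (hT : T.IsTree) (x : N) {S : Set N} {s t : S}
    (p : (T.induce S).Walk s t) : ∃ y ∈ S, TreeLE T x y s ∧ TreeLE T x y t := by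
  have hchain : (p.support.map Subtype.val).IsChain (SymmGen (TreeLE T x)) :=
    (List.isChain_map _).2 (p.isChain_adj_support.imp fun _ _ hab ↦ symmGen_of_adj hT x hab)
  obtain ⟨_, hy, hmin⟩ := exists_mem_forall_rel_of_isChain_symmGen (isChain_setOf_le hT x) hchain
    (mt List.map_eq_nil_iff.1 p.support_ne_nil)
  obtain ⟨y, -, rfl⟩ := List.mem_map.1 hy
  exact ⟨y, y.2, hmin s (List.mem_map_of_mem p.start_mem_support),
    hmin t (List.mem_map_of_mem p.end_mem_support)⟩

theorem exists_least_of_connected_induce (hT : T.IsTree) (x : N) {S : Set N}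
    (hS : (T.induce S).Connected) : ∃ m ∈ S, ∀ z ∈ S, TreeLE T x m z := by
  classical
  obtain ⟨s⟩ := hS.nonempty
  obtain ⟨p, hp⟩ := hT.connected.exists_isPath x s
  have hbelow : ∀ a ∈ p.support.filter (· ∈ S), TreeLE T x a s := fun a ha ↦
    (iff_mem_support hT.isAcyclic hp).2 (List.mem_of_mem_filter ha)
  have hchain : (p.support.filter (· ∈ S)).IsChain (SymmGen (TreeLE T x)) :=
    (List.pairwise_of_forall_mem_list fun a ha b hb ↦
      (isChain_setOf_le hT x s).total (hbelow a ha) (hbelow b hb)).isChain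
  obtain ⟨m, hm, hmin⟩ := exists_mem_forall_rel_of_isChain_symmGen (isChain_setOf_le hT x) hchain
    (List.ne_nil_of_mem (a := (s : N)) (by simp))
  refine ⟨m, by simpa using List.of_mem_filter hm, fun z hz ↦ ?_⟩
  obtain ⟨q⟩ := hS.preconnected s ⟨z, hz⟩
  obtain ⟨y, hyS, hys, hyz⟩ := exists_le_le_of_walk_induce hT x q
  exact trans_of (TreeLE T x) (hmin y (List.mem_filter.2 ⟨hys p, by simpa using hyS⟩)) hyz

end TreeLE

end TreeOrder

namespace TreeRep

variable {V N : Type*} {G : SimpleGraph V} {T : SimpleGraph N}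

theorem pathWeight_mono [Finite V] (R : TreeRep G T) {a b c d : N} {p : T.Walk a b}
    {q : T.Walk c d} (hpq : p.support ⊆ q.support) : R.pathWeight p ≤ R.pathWeight q :=
  Set.ncard_le_ncard fun _ ⟨t, ht, htv⟩ ↦ ⟨t, hpq ht, htv⟩

/-- The top of the model of `v` when the tree `T` is rooted at `x`: the node of the model that is
least in the tree-order. -/
noncomputable def top (R : TreeRep G T) (hT : T.IsTree) (x : N) (v : V) : N :=
  (TreeLE.exists_least_of_connected_induce hT x (R.model_connected v)).choose

variable (R : TreeRep G T) (hT : T.IsTree) (x : N)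

theorem top_mem_model (v : V) : R.top hT x v ∈ R.model v :=
  (TreeLE.exists_least_of_connected_induce hT x (R.model_connected v)).choose_spec.1

theorem top_le {v : V} {z : N} (hz : z ∈ R.model v) : TreeLE T x (R.top hT x v) z :=
  (TreeLE.exists_least_of_connected_induce hT x (R.model_connected v)).choose_spec.2 z hz

theorem setOf_top_eq_subset_bag (a : N) : {v | R.top hT x v = a} ⊆ R.bag a := by
  rintro v rfl
  exact R.top_mem_model hT x v

theorem setOf_top_eq_root : {v | R.top hT x v = x} = R.bag x :=
  (R.setOf_top_eq_subset_bag hT x x).antisymm fun _ hv ↦ TreeLE.le_root_iff.1 (R.top_le hT x hv)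

theorem symmGen_top_of_adj {u v : V} (h : G.Adj u v) :
    SymmGen (TreeLE T x) (R.top hT x u) (R.top hT x v) := by
  obtain ⟨z, hzu, hzv⟩ := R.adj_meet h
  exact (TreeLE.isChain_setOf_le hT x z).total (R.top_le hT x hzu) (R.top_le hT x hzv)

theorem ncard_setOf_top_le_le_pathWeight [Finite V] {l : N} (p : T.Walk x l) :
    {v | TreeLE T x (R.top hT x v) l}.ncard ≤ R.pathWeight p :=
  Set.ncard_le_ncard fun v hv ↦ ⟨R.top hT x v, hv p, R.top_mem_model hT x v⟩

end TreeRep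

section Hamiltonian

variable {V α : Type*} [DecidableEq V] {G : SimpleGraph V} {u v : V} {p : G.Walk u v}

theorem countP_map_support_of_isHamiltonian (hp : p.IsHamiltonian) (f : V → α) (P : α → Prop)
    [DecidablePred P] : (p.support.map f).countP (P ·) = {v | P (f v)}.ncard := by
  rw [List.countP_map, List.countP_eq_length_filter,
    ← List.toFinset_card_of_nodup (hp.isPath.support_nodup.filter _), ← Set.ncard_coe_finset]
  simp [hp.mem_support]

theorem count_map_support_of_isHamiltonian [DecidableEq α] (hp : p.IsHamiltonian) (f : V → α)
    (a : α) : (p.support.map f).count a = {v | f v = a}.ncard :=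
  countP_map_support_of_isHamiltonian hp f (· = a)

end Hamiltonian

theorem exists_isPath_isLeafNode_support_subset {N : Type*} [Finite N] {T : SimpleGraph N}
    (hT : T.IsAcyclic) {x l : N} (p : T.Walk x l) (hp : p.IsPath) :
    ∃ (l' : N) (q : T.Walk x l'), q.IsPath ∧ IsLeafNode T l' ∧ p.support ⊆ q.support := by
  by_cases hl : IsLeafNode T l
  · exact ⟨l, p, hp, hl, fun _ h ↦ h⟩
  obtain ⟨b, hlb, hbp⟩ : ∃ b, T.Adj l b ∧ b ∉ p.support := by
    by_contra! hsupp
    exact hl fun b hb c hc ↦ (hT.eq_penultimate_of_adj_end hp hb (hsupp b hb)).trans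
      (hT.eq_penultimate_of_adj_end hp hc (hsupp c hc)).symm
  obtain ⟨l', q, hq, hl', hpq⟩ :=
    exists_isPath_isLeafNode_support_subset hT (p.concat hlb) (hp.concat hbp hlb)
  exact ⟨l', q, hq, hl', fun _ h ↦ hpq (p.support_subset_support_concat hlb h)⟩
termination_by Nat.card N - p.length
decreasing_by
  have := Fintype.ofFinite N
  have hlt := (hp.concat hbp hlb).length_lt
  rw [Walk.length_concat] at hlt ⊢
  rw [Nat.card_eq_fintype_card]
  omega

theorem stmt12_general (k w : ℕ) {V : Type*} [Fintype V] (G : SimpleGraph V) (hham : HasHamPath G)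
    {N : Type*} (T : SimpleGraph N) (hT : T.IsTree) (R : TreeRep G T) (hwidth : R.WidthLT k)
    (hnode : ∃ x : N, ∀ (l : N) (p : T.Walk x l), p.IsPath →
      R.pathWeight p ≤ w + (R.bag x).ncard) :
    Fintype.card V ≤ (k + 1) ^ (w + 1) - 1 := by
  classical
  obtain ⟨u, v, p, hp, hall⟩ := hham
  obtain ⟨x, hx⟩ := hnode
  have hp : p.IsHamiltonian := hp.isHamiltonian_iff.2 hall
  have hchain : (p.support.map (R.top hT x)).IsChain (SymmGen (TreeLE T x)) :=
    (List.isChain_map _).2 (p.isChain_adj_support.imp fun _ _ ↦ R.symmGen_top_of_adj hT x)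
  have hcount (a : N) : (p.support.map (R.top hT x)).count a ≤ k := by
    rw [count_map_support_of_isHamiltonian hp]
    exact (Set.ncard_le_ncard (R.setOf_top_eq_subset_bag hT x a)).trans (hwidth a)
  have hweight (l : N) : (p.support.map (R.top hT x)).countP (TreeLE T x · l) ≤
      w + (p.support.map (R.top hT x)).count x := by
    obtain ⟨q, hq⟩ := hT.connected.exists_isPath x l
    rw [countP_map_support_of_isHamiltonian hp _ (TreeLE T x · l),
      count_map_support_of_isHamiltonian hp, R.setOf_top_eq_root hT x]
    exact (R.ncard_setOf_top_le_le_pathWeight hT x q).trans (hx l q hq)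
  have hlength := length_lt_pow_succ_of_countP_le_add_count (TreeLE.isChain_setOf_le hT x) hchain
    hcount (fun a _ ↦ TreeLE.root_le T x a) hweight
  rw [List.length_map, hp.length_support] at hlength
  exact Nat.le_sub_one_of_lt hlength

theorem stmt12 (k w : ℕ) {V : Type} [Fintype V] (G : SimpleGraph V) (hham : HasHamPath G)
    {N : Type} [Fintype N] (T : SimpleGraph N) (hT : T.IsTree) (R : TreeRep G T)
    (hwidth : R.WidthLT k)
    (hnode : ∃ x : N, ∀ (l : N) (p : T.Walk x l), p.IsPath → IsLeafNode T l →
      R.pathWeight p ≤ w + (R.bag x).ncard) :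
    Fintype.card V ≤ (k + 1) ^ (w + 1) - 1 := by
  obtain ⟨x, hx⟩ := hnode
  refine stmt12_general k w G hham T hT R hwidth ⟨x, fun l p hp ↦ ?_⟩
  obtain ⟨l', q, hq, hl', hpq⟩ := exists_isPath_isLeafNode_support_subset hT.isAcyclic p hp
  exact (R.pathWeight_mono hpq).trans (hx l' q hq hl')
end

section
/- For all natural numbers g, p, a, k with k ≥ 2 there is a constant c > 0 such that the following holds: if G is a (g, p, a, k)-almost-embeddable graph that has a Hamiltonian path and order n, then G has an induced path of order at least c·(log₂ n)^(1/k). -/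
open SimpleGraph Real

/-!
Let `l` be the largest order of an induced path of `G`. Then every connected induced subgraph of
`G` has diameter less than `l`, and this property is inherited by graphs obtained from `G` by
contracting disjoint connected sets of vertices.

A graph `H` with this property and a long Hamiltonian path has a `K₄` minor: two crossing edges
below a third edge yield one, and without them an edge spans at most `4 ^ l` vertices of the
Hamiltonian path, because the distances from its two ends are bounded by `l` and one of them drops
on each side of the greatest neighbour of one end; but if all edges are short, the diameter is
large. Hence a vertex with more than `2 * (g + 1) * 8 ^ l` neighbours yields a minor consisting of
`g + 1` copies of `K₅` that share a vertex. Such a graph has Euler genus larger than `g`, since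
each copy contributes a cycle over `ZMod 2`, and these are independent modulo the boundaries of
faces. So if `H` is a minor of a graph of Euler genus at most `g`, its degrees and its diameter
are bounded, and therefore it has order at most `T = 2 ^ O(l ^ 2)`.

The sets representing the vertices of the cycle of a vortex are intervals of bounded depth. On a
long cycle this gives `T + 1` consecutive blocks such that no edge of the vortex joins two blocks
that are not consecutive; contracting them yields a Hamiltonian minor of order `T + 1` of the
embedded part, which is impossible. So only `2 ^ O(l ^ 2)` vertices are apices or lie in a vortex,
and as there are no `T + 1` consecutive vertices of the Hamiltonian path of `G` among the others,
`G` has order at most `2 ^ O(l ^ 2)`.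
-/

section HereditaryDiameter

variable {V ι : Type*} {G : SimpleGraph V} {l : ℕ}

/-- Every connected induced subgraph of `G` has diameter less than `l`. This is equivalent to
`G` having no induced path on `l + 1` vertices, but is visibly preserved by contractions. -/
def HereditaryDiamLT (G : SimpleGraph V) (l : ℕ) : Prop :=
  ∀ S : Set V, (G.induce S).Connected → ∀ u v : S, (G.induce S).dist u v < l

lemma dist_getVert_of_length_eq_dist {u v : V} {p : G.Walk u v} (hp : p.length = G.dist u v)
    {i : ℕ} (hi : i ≤ p.length) : G.dist u (p.getVert i) = i := by
  rw [← length_eq_dist_of_subwalk hp (p.isSubwalk_take i), Walk.take_length, min_eq_left hi]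

lemma nonempty_pathGraph_embedding_of_reachable {u v : V} (h : G.Reachable u v) :
    Nonempty (pathGraph (G.dist u v + 1) ↪g G) := by
  obtain ⟨p, hp⟩ := h.exists_walk_length_eq_dist
  have hdist : ∀ i : Fin (G.dist u v + 1), G.dist u (p.getVert i) = i := fun i ↦
    dist_getVert_of_length_eq_dist hp (by lia)
  have hsucc : ∀ i j : Fin (G.dist u v + 1), (i : ℕ) + 1 = j →
      G.Adj (p.getVert i) (p.getVert j) := fun i j hij ↦
    hij ▸ p.adj_getVert_succ (by lia)
  have hadj : ∀ i j : Fin (G.dist u v + 1), G.Adj (p.getVert i) (p.getVert j) ↔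
      (pathGraph (G.dist u v + 1)).Adj i j := fun i j ↦ by
    rw [pathGraph_adj]
    refine ⟨fun h ↦ ?_, fun h ↦ h.elim (hsucc i j) fun h ↦ (hsucc j i h).symm⟩
    have hne : i ≠ j := fun hij ↦ h.ne (hij ▸ rfl)
    have hdiff := h.diff_dist_adj (u := u)
    rw [hdist, hdist] at hdiff
    lia
  refine ⟨⟨⟨fun i ↦ p.getVert i, fun i j hij ↦ Fin.ext ?_⟩, fun {i j} ↦ hadj i j⟩⟩
  rw [← hdist i, ← hdist j]
  exact congrArg (G.dist u) hij

lemma le_add_dist_of_forall_adj {φ : V → ℕ} (hφ : ∀ u v, G.Adj u v → φ v ≤ φ u + 1) {u v : V}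
    (h : G.Reachable u v) : φ v ≤ φ u + G.dist u v := by
  obtain ⟨p, hp⟩ := h.exists_walk_length_eq_dist
  rw [← hp]
  clear hp
  induction p with
  | nil => simp
  | cons hadj p ih =>
    have := ih p.reachable
    have := hφ _ _ hadj
    rw [Walk.length_cons]
    lia

lemma hereditaryDiamLT_of_forall_pathGraph_embedding
    (h : ∀ m, Nonempty (pathGraph m ↪g G) → m ≤ l) : HereditaryDiamLT G l := by
  intro S hS u v
  obtain ⟨f⟩ := nonempty_pathGraph_embedding_of_reachable (hS u v)
  exact h _ ⟨(Embedding.induce S).comp f⟩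

lemma exists_pathGraph_embedding_hereditaryDiamLT [Finite V] [Nonempty V] (G : SimpleGraph V) :
    ∃ l, 0 < l ∧ Nonempty (pathGraph l ↪g G) ∧ HereditaryDiamLT G l := by
  classical
  have hle : ∀ m, Nonempty (pathGraph m ↪g G) → m ≤ Nat.card V := fun m ⟨f⟩ ↦ by
    simpa using Nat.card_le_card_of_injective f f.injective
  have hone : Nonempty (pathGraph 1 ↪g G) := by
    obtain ⟨v⟩ := ‹Nonempty V›
    have h := nonempty_pathGraph_embedding_of_reachable (Reachable.refl (G := G) v)
    rwa [dist_self] at h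
  have hcard : 1 ≤ Nat.card V := hle 1 hone
  refine ⟨Nat.findGreatest (fun m ↦ Nonempty (pathGraph m ↪g G)) (Nat.card V),
    Nat.le_findGreatest hcard hone,
    Nat.findGreatest_spec (P := fun m ↦ Nonempty (pathGraph m ↪g G)) hcard hone,
    hereditaryDiamLT_of_forall_pathGraph_embedding fun m hm ↦ Nat.le_findGreatest (hle m hm) hm⟩

lemma HereditaryDiamLT.lt_add_of_forall_adj (hG : HereditaryDiamLT G l) {S : Set V}
    (hS : (G.induce S).Connected) {φ : V → ℕ}
    (hφ : ∀ u ∈ S, ∀ v ∈ S, G.Adj u v → φ v ≤ φ u + 1) {u v : V} (hu : u ∈ S) (hv : v ∈ S) :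
    φ v < φ u + l :=
  (le_add_dist_of_forall_adj (G := G.induce S) (φ := fun w ↦ φ w)
    (fun u v h ↦ hφ u u.2 v v.2 h) (hS ⟨u, hu⟩ ⟨v, hv⟩)).trans_lt
    (Nat.add_lt_add_left (hG S hS _ _) _)

end HereditaryDiameter

section Minor

variable {V W U ι : Type*} {G : SimpleGraph V} {H : SimpleGraph W} {K : SimpleGraph U} {l : ℕ}

lemma connected_induce_singleton (G : SimpleGraph V) (v : V) :
    (G.induce ({v} : Set V)).Connected :=
  { preconnected := .of_subsingleton }

lemma connected_induce_iUnion {β : W → Set V} (hH : H.Connected)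
    (hβ : ∀ w, (G.induce (β w)).Connected)
    (hadj : ∀ w w', H.Adj w w' → ∃ u ∈ β w, ∃ v ∈ β w', G.Adj u v) :
    (G.induce (⋃ w, β w)).Connected := by
  have hblock : ∀ w (u v : V) (hu : u ∈ β w) (hv : v ∈ β w),
      (G.induce (⋃ w, β w)).Reachable ⟨u, Set.mem_iUnion_of_mem w hu⟩
        ⟨v, Set.mem_iUnion_of_mem w hv⟩ := fun w u v hu hv ↦
    ((hβ w) ⟨u, hu⟩ ⟨v, hv⟩).map (induceHomOfLE G (Set.subset_iUnion β w)).toHom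
  obtain ⟨w₀⟩ := hH.nonempty
  obtain ⟨u₀, hu₀⟩ := (hβ w₀).nonempty
  rw [connected_iff_exists_forall_reachable]
  refine ⟨⟨u₀, Set.mem_iUnion_of_mem w₀ hu₀⟩, fun ⟨v, hv⟩ ↦ ?_⟩
  obtain ⟨w, hvw⟩ := Set.mem_iUnion.mp hv
  obtain ⟨p⟩ := hH w₀ w
  induction p generalizing u₀ with
  | nil => exact hblock _ _ _ hu₀ hvw
  | cons h _ ih =>
    obtain ⟨x, hx, y, hy, hxy⟩ := hadj _ _ h
    have hstep : (G.induce (⋃ w, β w)).Adj ⟨x, Set.mem_iUnion_of_mem _ hx⟩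
      ⟨y, Set.mem_iUnion_of_mem _ hy⟩ := hxy
    exact ((hblock _ _ _ hu₀ hx).trans hstep.reachable).trans (ih y hy hvw)

/-- The graph obtained from `G` by contracting each `β i` to a vertex and deleting the vertices
outside all the `β i`. -/
def blockGraph (G : SimpleGraph V) (β : ι → Set V) : SimpleGraph ι where
  Adj i j := i ≠ j ∧ ∃ u ∈ β i, ∃ v ∈ β j, G.Adj u v
  symm := ⟨fun _ _ ⟨hne, u, hu, v, hv, h⟩ ↦ ⟨hne.symm, v, hv, u, hu, h.symm⟩⟩

/-- `β` assigns to the vertices of `H` the branch sets of a minor model of `H` in `G`. -/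
structure IsMinorModel (H : SimpleGraph W) (G : SimpleGraph V) (β : W → Set V) : Prop where
  connected : ∀ w, (G.induce (β w)).Connected
  disjoint : ∀ w w', w ≠ w' → Disjoint (β w) (β w')
  le_blockGraph : H ≤ blockGraph G β

/-- `H` is a minor of `G`. -/
def IsMinor (H : SimpleGraph W) (G : SimpleGraph V) : Prop := ∃ β, IsMinorModel H G β

lemma IsMinorModel.isMinor {β : W → Set V} (hβ : IsMinorModel H G β) : IsMinor H G := ⟨β, hβ⟩

lemma isMinorModel_blockGraph {β : ι → Set V} (hβ : ∀ i, (G.induce (β i)).Connected)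
    (hdisj : ∀ i j, i ≠ j → Disjoint (β i) (β j)) : IsMinorModel (blockGraph G β) G β :=
  ⟨hβ, hdisj, le_rfl⟩

lemma isMinor_of_injective (f : H →g G) (hf : Function.Injective f) : IsMinor H G :=
  ⟨fun w ↦ {f w}, fun w ↦ connected_induce_singleton G (f w),
    fun _ _ hne ↦ Set.disjoint_singleton.mpr (hf.ne hne),
    fun _ _ h ↦ ⟨h.ne, _, rfl, _, rfl, f.map_adj h⟩⟩

lemma isMinor_of_le {H' : SimpleGraph W} (h : H ≤ H') : IsMinor H H' :=
  isMinor_of_injective (.ofLE h) Function.injective_id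

lemma isMinor_top_of_forall_lt [LinearOrder ι] {β : ι → Set V}
    (hβ : ∀ i, (G.induce (β i)).Connected) (hdisj : ∀ i j, i < j → Disjoint (β i) (β j))
    (hadj : ∀ i j, i < j → ∃ u ∈ β i, ∃ v ∈ β j, G.Adj u v) :
    IsMinor (⊤ : SimpleGraph ι) G := by
  refine ⟨β, hβ, fun i j hne ↦ ?_, fun i j hne ↦ ⟨hne, ?_⟩⟩
  · exact hne.lt_or_gt.elim (hdisj i j) fun h ↦ (hdisj j i h).symm
  · rcases lt_or_gt_of_ne hne with h | h
    · exact hadj i j h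
    · obtain ⟨u, hu, v, hv, huv⟩ := hadj j i h
      exact ⟨v, hv, u, hu, huv.symm⟩

lemma IsMinor.trans (hHG : IsMinor H G) (hGK : IsMinor G K) : IsMinor H K := by
  obtain ⟨β, hβ⟩ := hHG
  obtain ⟨γ, hγ⟩ := hGK
  refine ⟨fun w ↦ ⋃ v : β w, γ v, fun w ↦ ?_, fun w w' hne ↦ ?_, fun w w' h ↦ ⟨h.ne, ?_⟩⟩
  · exact connected_induce_iUnion (hβ.connected w) (fun v ↦ hγ.connected v)
      fun u v huv ↦ (hγ.le_blockGraph huv).2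
  · simp only [Set.disjoint_iUnion_left, Set.disjoint_iUnion_right]
    exact fun u v ↦ hγ.disjoint _ _ ((hβ.disjoint w w' hne).ne_of_mem v.2 u.2)
  · obtain ⟨-, u, hu, v, hv, huv⟩ := hβ.le_blockGraph h
    obtain ⟨-, x, hx, y, hy, hxy⟩ := hγ.le_blockGraph huv
    exact ⟨x, Set.mem_iUnion_of_mem ⟨u, hu⟩ hx, y, Set.mem_iUnion_of_mem ⟨v, hv⟩ hy, hxy⟩

lemma HereditaryDiamLT.of_isMinorModel_blockGraph (hG : HereditaryDiamLT G l) {β : ι → Set V}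
    (hβ : IsMinorModel (blockGraph G β) G β) : HereditaryDiamLT (blockGraph G β) l := by
  intro S hS i j
  set Q := (blockGraph G β).induce S
  have : Nonempty S := ⟨i⟩
  have hconn : (G.induce (⋃ i : S, β i)).Connected :=
    connected_induce_iUnion hS (fun i ↦ hβ.connected i) fun i j hij ↦ (hβ.le_blockGraph hij).2
  choose! block hblock using fun (u : V) (hu : u ∈ ⋃ i : S, β i) ↦ Set.mem_iUnion.mp hu
  have hblock_eq : ∀ {u : V} {i : S}, u ∈ β i → block u = i := fun {u i} hi ↦ by
    by_contra hne
    exact (hβ.disjoint _ _ (Subtype.coe_ne_coe.mpr hne)).ne_of_mem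
      (hblock u (Set.mem_iUnion_of_mem i hi)) hi rfl
  have hlip : ∀ u ∈ ⋃ i : S, β i, ∀ v ∈ ⋃ i : S, β i, G.Adj u v →
      Q.dist i (block v) ≤ Q.dist i (block u) + 1 := fun u hu v hv huv ↦ by
    rcases eq_or_ne (block u) (block v) with heq | hne
    · rw [heq]
      exact Nat.le_succ _
    · have hadj : Q.Adj (block u) (block v) :=
        ⟨Subtype.coe_ne_coe.mpr hne, u, hblock u hu, v, hblock v hv, huv⟩
      exact hS.dist_triangle.trans_eq (congrArg _ (dist_eq_one_iff_adj.mpr hadj))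
  obtain ⟨u, hu⟩ := hβ.connected i |>.nonempty
  obtain ⟨v, hv⟩ := hβ.connected j |>.nonempty
  have hlt := hG.lt_add_of_forall_adj hconn hlip (Set.mem_iUnion_of_mem i hu)
    (Set.mem_iUnion_of_mem j hv)
  rwa [hblock_eq hu, hblock_eq hv, dist_self, zero_add] at hlt

lemma HereditaryDiamLT.comap (hG : HereditaryDiamLT G l) (f : ι ↪ V) :
    HereditaryDiamLT (G.comap f) l := by
  have hblock : G.comap f = blockGraph G fun i ↦ {f i} := by
    ext i j
    simpa [blockGraph] using fun h hij ↦ (h.ne (congrArg f hij)).elim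
  rw [hblock]
  exact hG.of_isMinorModel_blockGraph (isMinorModel_blockGraph
    (fun i ↦ connected_induce_singleton G (f i))
    fun i j hne ↦ Set.disjoint_singleton.mpr (f.injective.ne hne))

end Minor

section Cone

variable {V W U ι : Type*} {G : SimpleGraph V} {H : SimpleGraph W} {K : SimpleGraph U}

/-- The cone over `K`: a new vertex `none` is joined to all vertices of `K`. -/
def cone (K : SimpleGraph W) : SimpleGraph (Option W) where
  Adj
    | none, none => False
    | none, some _ => True
    | some _, none => True
    | some u, some v => K.Adj u v
  symm := ⟨by rintro (_ | u) (_ | v) h <;> first | exact h.symm | trivial⟩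
  loopless := ⟨by rintro (_ | u) h; exacts [h, h.ne rfl]⟩

/-- The union of copies of `cone K`, one for each element of `ι`, sharing their apex. -/
abbrev bouquet (ι : Type*) (K : SimpleGraph W) : SimpleGraph (Option (ι × W)) :=
  cone ((⊥ : SimpleGraph ι) □ K)

lemma isMinor_cone_of_isMinorModel {β : W → Set V} {a : V} (hβ : IsMinorModel H G β)
    (ha : ∀ w, a ∉ β w) (hadj : ∀ w, ∃ v ∈ β w, G.Adj a v) : IsMinor (cone H) G := by
  refine ⟨fun x ↦ x.elim {a} β, ?_, ?_, ?_⟩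
  · rintro (_ | w)
    exacts [connected_induce_singleton G a, hβ.connected w]
  · rintro (_ | w) (_ | w') hne
    · exact (hne rfl).elim
    · exact Set.disjoint_singleton_left.mpr (ha w')
    · exact Set.disjoint_singleton_right.mpr (ha w)
    · exact hβ.disjoint w w' fun h ↦ hne (congrArg some h)
  · rintro (_ | w) (_ | w') h
    · exact h.elim
    · exact ⟨h.ne, a, rfl, hadj w'⟩
    · obtain ⟨v, hv, hav⟩ := hadj w
      exact ⟨h.ne, v, hv, a, rfl, hav.symm⟩
    · exact ⟨h.ne, (hβ.le_blockGraph h).2⟩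

lemma connected_induce_image {S : Set W} (f : H →g G) (hS : (H.induce S).Connected) :
    (G.induce (f '' S)).Connected := by
  let f' : H.induce S →g G.induce (f '' S) :=
    ⟨fun v ↦ ⟨f v, v, v.2, rfl⟩, fun h ↦ f.map_adj h⟩
  refine hS.map f' ?_
  rintro ⟨_, v, hv, rfl⟩
  exact ⟨⟨v, hv⟩, rfl⟩

lemma IsMinorModel.image {β : W → Set V} (hβ : IsMinorModel H G β) (f : G →g K)
    (hf : Function.Injective f) : IsMinorModel H K fun w ↦ f '' β w := by
  refine ⟨fun w ↦ connected_induce_image f (hβ.connected w), fun w w' hne ↦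
    (Set.disjoint_image_iff hf).mpr (hβ.disjoint w w' hne), fun w w' h ↦ ⟨h.ne, ?_⟩⟩
  obtain ⟨-, u, hu, v, hv, huv⟩ := hβ.le_blockGraph h
  exact ⟨f u, ⟨u, hu, rfl⟩, f v, ⟨v, hv, rfl⟩, f.map_adj huv⟩

lemma IsMinor.cone (h : IsMinor H G) : IsMinor (cone H) (cone G) := by
  obtain ⟨β, hβ⟩ := h
  refine isMinor_cone_of_isMinorModel (a := none)
    (hβ.image ⟨some, fun h ↦ h⟩ (Option.some_injective V)) ?_ fun w ↦ ?_
  · rintro w ⟨v, -, hv⟩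
    exact Option.some_ne_none v hv
  · obtain ⟨v, hv⟩ := (hβ.connected w).nonempty
    exact ⟨some v, ⟨v, hv, rfl⟩, trivial⟩

lemma isMinor_bot_boxProd {f : ι × W → V} (hf : Function.Injective f)
    (h : ∀ i, IsMinor K (G.comap fun w ↦ f (i, w))) :
    IsMinor ((⊥ : SimpleGraph ι) □ K) G := by
  choose β hβ using h
  have hcopy : ∀ i, IsMinorModel K G fun u ↦ (fun w ↦ f (i, w)) '' β i u := fun i ↦
    (hβ i).image ⟨fun w ↦ f (i, w), fun h ↦ h⟩ fun w w' h ↦ congrArg Prod.snd (hf h)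
  refine ⟨fun x ↦ (fun w ↦ f (x.1, w)) '' β x.1 x.2, fun x ↦ (hcopy x.1).connected x.2, ?_, ?_⟩
  · rintro ⟨i, u⟩ ⟨j, u'⟩ hne
    rcases eq_or_ne i j with rfl | hij
    · exact (hcopy i).disjoint u u' fun h ↦ hne (congrArg _ h)
    · rw [Set.disjoint_left]
      rintro _ ⟨w, -, rfl⟩ ⟨w', -, hw⟩
      exact hij (congrArg Prod.fst (hf hw)).symm
  · rintro ⟨i, u⟩ ⟨j, u'⟩ h
    obtain ⟨hK, rfl⟩ | ⟨hK, rfl⟩ := boxProd_adj.mp h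
    · exact hK.elim
    · exact ⟨h.ne, ((hcopy i).le_blockGraph hK).2⟩

end Cone

section HamiltonianOrder

variable {N : ℕ} {H : SimpleGraph (Fin N)} {l : ℕ}

lemma connected_induce_of_ordConnected (hH : pathGraph N ≤ H) {S : Set (Fin N)}
    (hS : S.OrdConnected) (hne : S.Nonempty) : (H.induce S).Connected := by
  have hup : ∀ (d : ℕ) (u v : S), (v : ℕ) = u + d → (H.induce S).Reachable u v := by
    intro d
    induction d with
    | zero => exact fun u v h ↦ (Subtype.ext (Fin.ext h) : v = u) ▸ .refl v
    | succ d ih =>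
      intro u v h
      have hw : (⟨u + d, by lia⟩ : Fin N) ∈ S :=
        hS.out u.2 v.2 ⟨Fin.mk_le_mk.mpr (by lia), Fin.mk_le_mk.mpr (by lia)⟩
      have hadj : (H.induce S).Adj ⟨⟨u + d, by lia⟩, hw⟩ v :=
        hH (pathGraph_adj.mpr (.inl h.symm))
      exact (ih u ⟨_, hw⟩ rfl).trans hadj.reachable
  refine { preconnected := fun u v ↦ ?_, nonempty := hne.to_subtype }
  rcases le_total (u : ℕ) v with h | h
  · exact hup _ u v (Nat.add_sub_of_le h).symm
  · exact (hup _ v u (Nat.add_sub_of_le h).symm).symm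

lemma exists_adj_Ico_of_lt (hH : pathGraph N ≤ H) {x y : Fin N} (h : x < y) :
    ∃ u ∈ Set.Ico x y, H.Adj u y :=
  ⟨⟨y - 1, by lia⟩, ⟨Fin.mk_le_mk.mpr (by lia), Fin.mk_lt_mk.mpr (by lia)⟩,
    hH (pathGraph_adj.mpr (.inl (Nat.sub_add_cancel (by lia))))⟩

section Division

variable {d : ℕ} {n : Fin (d + 1) → Fin N}

/-- The consecutive intervals into which the points `n 0 < n 1 < ⋯ < n d` divide `Fin N`. -/
def division (n : Fin (d + 1) → Fin N) (i : Fin d) : Set (Fin N) :=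
  Set.Ico (n i.castSucc) (n i.succ)

lemma isMinorModel_blockGraph_division (hH : pathGraph N ≤ H) (hn : StrictMono n) :
    IsMinorModel (blockGraph H (division n)) H (division n) := by
  have hlt : ∀ i j : Fin d, i < j → Disjoint (division n i) (division n j) := fun i j h ↦ by
    rw [Set.disjoint_left]
    exact fun u hi hj ↦ (hi.2.trans_le ((hn.monotone (Fin.succ_le_castSucc_iff.mpr h)).trans
      hj.1)).false
  refine isMinorModel_blockGraph (fun i ↦ connected_induce_of_ordConnected hH Set.ordConnected_Ico
    (Set.nonempty_Ico.mpr (hn i.castSucc_lt_succ))) fun i j hne ↦ ?_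
  exact hne.lt_or_gt.elim (hlt i j) fun h ↦ (hlt j i h).symm

lemma pathGraph_le_blockGraph_division (hH : pathGraph N ≤ H) (hn : StrictMono n) :
    pathGraph d ≤ blockGraph H (division n) := by
  have hsucc : ∀ i j : Fin d, (i : ℕ) + 1 = j → (blockGraph H (division n)).Adj i j := by
    intro i j hij
    have hi : i.succ = j.castSucc := Fin.ext hij
    obtain ⟨u, hu, huv⟩ := exists_adj_Ico_of_lt hH (hn i.castSucc_lt_succ)
    exact ⟨by lia, u, hu, n i.succ, hi ▸ ⟨le_rfl, hn j.castSucc_lt_succ⟩, huv⟩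
  exact fun i j h ↦ (pathGraph_adj.mp h).elim (hsucc i j) fun h ↦ (hsucc j i h).symm

end Division

end HamiltonianOrder

section HereditaryRadius

variable {V : Type*} {H : SimpleGraph V} {S : Set V} {r : V} {l a : ℕ}

/-- In every connected induced subgraph of `H.induce S` containing `r`, all vertices are at
distance less than `a` from `r`; distances are tested by the functions `φ` growing by at most one
along edges. -/
def HereditaryRadiusLT (H : SimpleGraph V) (S : Set V) (r : V) (a : ℕ) : Prop :=
  ∀ T ⊆ S, r ∈ T → (H.induce T).Connected → ∀ φ : V → ℕ, φ r = 0 →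
    (∀ u ∈ T, ∀ v ∈ T, H.Adj u v → φ v ≤ φ u + 1) → ∀ v ∈ T, φ v < a

lemma HereditaryDiamLT.hereditaryRadiusLT (hH : HereditaryDiamLT H l) :
    HereditaryRadiusLT H S r l := fun T _ hr hT φ hφr hφ v hv ↦ by
  simpa [hφr] using hH.lt_add_of_forall_adj hT hφ hr hv

lemma HereditaryRadiusLT.pos (h : HereditaryRadiusLT H S r a) (hr : r ∈ S) : 0 < a :=
  h {r} (Set.singleton_subset_iff.mpr hr) rfl (connected_induce_singleton H r) 0 rfl
    (fun _ _ _ _ _ ↦ Nat.zero_le _) r rfl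

lemma HereditaryRadiusLT.mono (h : HereditaryRadiusLT H S r a) {S' : Set V} (hS : S' ⊆ S) :
    HereditaryRadiusLT H S' r a := fun T hT ↦ h T (hT.trans hS)

/-- If all edges between a connected set `P ∋ r` and `S'` end in `r'`, then paths in `S'`
starting in `r'` can be prolonged through `P` to `r`. -/
lemma HereditaryRadiusLT.of_attach (h : HereditaryRadiusLT H S r (a + 1)) {P S' : Set V} {r' : V}
    (hr : r ∈ P) (hP : (H.induce P).Connected) (hPS : P ∪ S' ⊆ S) (hdisj : Disjoint P S')
    (hadj : ∃ p ∈ P, H.Adj p r') (honly : ∀ p ∈ P, ∀ v ∈ S', H.Adj p v → v = r') :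
    HereditaryRadiusLT H S' r' a := by
  classical
  intro T hT hr' hconn φ hφr hφ v hv
  obtain ⟨p, hp, hpr⟩ := hadj
  have hTP : ∀ {v}, v ∈ T → v ∉ P := fun hv hP ↦ hdisj.ne_of_mem hP (hT hv) rfl
  let ψ : V → ℕ := fun v ↦ if v = r then 0 else if v ∈ P then 1 else φ v + 1
  have hψP : ∀ {v}, v ∈ P → ψ v ≤ 1 := fun {v} hv ↦ by
    simp only [ψ, if_pos hv]
    split <;> lia
  have hψT : ∀ {v}, v ∈ T → ψ v = φ v + 1 := fun {v} hv ↦ by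
    simp only [ψ, if_neg (hTP hv), if_neg fun h : v = r ↦ hTP hv (h ▸ hr)]
  have hψ : ∀ u ∈ P ∪ T, ∀ v ∈ P ∪ T, H.Adj u v → ψ v ≤ ψ u + 1 := by
    rintro u (hu | hu) v (hv | hv) huv
    · exact (hψP hv).trans (Nat.le_add_left 1 _)
    · rw [honly u hu v (hT hv) huv, hψT hr', hφr]
      exact Nat.le_add_left 1 _
    · exact (hψP hv).trans (Nat.le_add_left 1 _)
    · rw [hψT hu, hψT hv]
      exact Nat.succ_le_succ (hφ u hu v hv huv)
  have hlt := h (P ∪ T) ((Set.union_subset_union_right P hT).trans hPS) (.inl hr)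
    (connected_induce_union hP.preconnected hconn.preconnected hp hr' hpr) ψ (if_pos rfl) hψ v
    (.inr hv)
  rw [hψT hv] at hlt
  lia

end HereditaryRadius

section Noncrossing

variable {N : ℕ} {H : SimpleGraph (Fin N)} {l : ℕ}

/-- No two edges of `H` with all ends in `[x, y]` cross. -/
def NoncrossingOn (H : SimpleGraph (Fin N)) (x y : Fin N) : Prop :=
  ∀ p c q e, x ≤ p → p < c → c < q → q < e → e ≤ y → H.Adj p q → ¬ H.Adj c e

lemma NoncrossingOn.mono {x y x' y' : Fin N} (h : NoncrossingOn H x y) (hx : x ≤ x')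
    (hy : y' ≤ y) : NoncrossingOn H x' y' :=
  fun p c q e hp hpc hcq hqe he ↦ h p c q e (hx.trans hp) hpc hcq hqe (he.trans hy)

lemma exists_greatest_adj_lt (hH : pathGraph N ≤ H) {x y : Fin N} (hxy : (x : ℕ) + 1 < y) :
    ∃ z, x < z ∧ z < y ∧ H.Adj x z ∧ ∀ v, v < y → H.Adj x v → v ≤ z := by
  classical
  let s := Finset.univ.filter fun v ↦ v < y ∧ H.Adj x v
  have hs : (⟨x + 1, by lia⟩ : Fin N) ∈ s := by
    simp only [s, Finset.mem_filter_univ]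
    exact ⟨hxy, hH (pathGraph_adj.mpr (.inl rfl))⟩
  have hz := Finset.mem_filter.mp (s.max'_mem ⟨_, hs⟩)
  exact ⟨s.max' ⟨_, hs⟩, (Fin.lt_def.mpr (Nat.lt_succ_self _)).trans_le (s.le_max' _ hs),
    hz.2.1, hz.2.2, fun v hv hxv ↦ s.le_max' v (by simp [s, hv, hxv])⟩

lemma NoncrossingOn.sub_le_two_pow (hH : pathGraph N ≤ H) {a b : ℕ} {x y : Fin N}
    (hnc : NoncrossingOn H x y) (hxy : x < y) (ha : HereditaryRadiusLT H (Set.Ico x y) x a)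
    (hb : HereditaryRadiusLT H (Set.Ioc x y) y b) : (y - x : ℕ) ≤ 2 ^ (a + b) := by
  induction hs : a + b generalizing x y a b with
  | zero => exact absurd (ha.pos ⟨le_rfl, hxy⟩) (by lia)
  | succ s ih =>
    obtain ⟨a, rfl⟩ := Nat.exists_eq_succ_of_ne_zero (ha.pos ⟨le_rfl, hxy⟩).ne'
    obtain ⟨b, rfl⟩ := Nat.exists_eq_succ_of_ne_zero (hb.pos ⟨hxy, le_rfl⟩).ne'
    rcases Nat.lt_or_ge (x + 1) y with hlt | hge
    swap
    · have := Nat.one_le_two_pow (n := s + 1)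
      lia
    obtain ⟨z, hxz, hzy, hadj, hmax⟩ := exists_greatest_adj_lt hH hlt
    have hleft : HereditaryRadiusLT H (Set.Ioc x z) z b := by
      refine hb.of_attach (P := Set.Ioc z y) ⟨hzy, le_rfl⟩
        (connected_induce_of_ordConnected hH Set.ordConnected_Ioc ⟨y, hzy, le_rfl⟩) ?_ ?_ ?_ ?_
      · rw [Set.union_comm, Set.Ioc_union_Ioc_eq_Ioc hxz.le hzy.le]
      · exact Set.disjoint_left.mpr fun v hv hv' ↦ (hv.1.trans_le hv'.2).false
      · exact ⟨⟨z + 1, by lia⟩, ⟨Fin.lt_def.mpr (Nat.lt_succ_self _), Fin.le_def.mpr hzy⟩,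
          hH (pathGraph_adj.mpr (.inr rfl))⟩
      · exact fun p hp v hv hpv ↦ hv.2.eq_of_not_lt fun hvz ↦
          hnc x v z p le_rfl hv.1 hvz hp.1 hp.2 hadj hpv.symm
    have hright : HereditaryRadiusLT H (Set.Ico z y) z a := by
      refine ha.of_attach (P := {x}) rfl (connected_induce_singleton H x) ?_ ?_ ⟨x, rfl, hadj⟩ ?_
      · exact Set.union_subset (Set.singleton_subset_iff.mpr ⟨le_rfl, hxy⟩)
          (Set.Ico_subset_Ico_left hxz.le)
      · exact Set.disjoint_singleton_left.mpr fun h ↦ (hxz.trans_le h.1).false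
      · rintro _ rfl v hv hxv
        exact (hmax v hv.2 hxv).antisymm hv.1
    have hzx := ih (hnc.mono le_rfl hzy.le) hxz (ha.mono (Set.Ico_subset_Ico_right hzy.le))
      hleft (by lia)
    have hyz := ih (hnc.mono hxz.le le_rfl) hzy hright (hb.mono (Set.Ioc_subset_Ioc_left hxz.le))
      (by lia)
    rw [pow_succ]
    lia

end Noncrossing

section HamiltonianMinors

variable {N l t : ℕ} {H : SimpleGraph (Fin N)}

lemma isMinor_top_of_crossing (hH : pathGraph N ≤ H) {x p c q e y : Fin N} (hxp : x ≤ p)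
    (hpc : p < c) (hcq : c < q) (hqe : q < e) (hey : e ≤ y) (hxy : H.Adj x y) (hpq : H.Adj p q)
    (hce : H.Adj c e) : IsMinor (⊤ : SimpleGraph (Fin 4)) H := by
  let β : Fin 4 → Set (Fin N) := ![Set.Ico x c, Set.Ico c q, Set.Ico q e, Set.Icc e y]
  have hxc := hxp.trans_lt hpc
  have hadj : ∀ i j, i < j → ∃ u ∈ β i, ∃ v ∈ β j, H.Adj u v := by
    intro i j hij
    fin_cases i <;> fin_cases j <;> try exact absurd hij (by decide)
    · obtain ⟨u, hu, huc⟩ := exists_adj_Ico_of_lt hH hxc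
      exact ⟨u, hu, c, ⟨le_rfl, hcq⟩, huc⟩
    · exact ⟨p, ⟨hxp, hpc⟩, q, ⟨le_rfl, hqe⟩, hpq⟩
    · exact ⟨x, ⟨le_rfl, hxc⟩, y, ⟨hey, le_rfl⟩, hxy⟩
    · obtain ⟨u, hu, huq⟩ := exists_adj_Ico_of_lt hH hcq
      exact ⟨u, hu, q, ⟨le_rfl, hqe⟩, huq⟩
    · exact ⟨c, ⟨le_rfl, hcq⟩, e, ⟨le_rfl, hey⟩, hce⟩
    · obtain ⟨u, hu, hue⟩ := exists_adj_Ico_of_lt hH hqe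
      exact ⟨u, hu, e, ⟨le_rfl, hey⟩, hue⟩
  refine isMinor_top_of_forall_lt (β := β)
    (fun i ↦ connected_induce_of_ordConnected hH ?_ ?_) (fun i j hij ↦ ?_) hadj
  · fin_cases i
    exacts [Set.ordConnected_Ico, Set.ordConnected_Ico, Set.ordConnected_Ico, Set.ordConnected_Icc]
  · fin_cases i
    exacts [⟨x, le_rfl, hxc⟩, ⟨c, le_rfl, hcq⟩, ⟨q, le_rfl, hqe⟩, ⟨e, le_rfl, hey⟩]
  · rw [Set.disjoint_left]
    intro u hi hj
    fin_cases i <;> fin_cases j <;> try exact absurd hij (by decide)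
    all_goals
      simp only [β, Fin.zero_eta, Fin.mk_one, Fin.reduceFinMk, Matrix.cons_val, Set.mem_Ico,
        Set.mem_Icc] at hi hj
      lia

lemma HereditaryDiamLT.isMinor_top_four (hl : HereditaryDiamLT H l) (hH : pathGraph N ≤ H)
    (hN : l * 4 ^ l < N) : IsMinor (⊤ : SimpleGraph (Fin 4)) H := by
  by_contra hminor
  have hnc : ∀ x y, H.Adj x y → NoncrossingOn H x y := fun x y hxy p c q e hxp hpc hcq hqe hey
    hpq hce ↦ hminor (isMinor_top_of_crossing hH hxp hpc hcq hqe hey hxy hpq hce)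
  have hlen : ∀ x y, H.Adj x y → (y - x : ℕ) ≤ 4 ^ l := fun x y hxy ↦ by
    rcases le_or_gt y x with h | h
    · lia
    · calc (y - x : ℕ) ≤ 2 ^ (l + l) := (hnc x y hxy).sub_le_two_pow hH h
            hl.hereditaryRadiusLT hl.hereditaryRadiusLT
        _ = 4 ^ l := by rw [← two_mul, pow_mul]; norm_num
  have hpos : 0 < 4 ^ l := by positivity
  have hlip : ∀ u ∈ Set.univ, ∀ v ∈ Set.univ, H.Adj u v →
      (v : ℕ) / 4 ^ l ≤ (u : ℕ) / 4 ^ l + 1 := fun u _ v _ huv ↦ by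
    rw [← Nat.add_div_right _ hpos]
    exact Nat.div_le_div_right (by have := hlen u v huv; lia)
  have hlt := hl.lt_add_of_forall_adj (connected_induce_of_ordConnected hH Set.ordConnected_univ
    ⟨⟨0, by lia⟩, trivial⟩) hlip (u := ⟨0, by lia⟩) (v := ⟨l * 4 ^ l, hN⟩) trivial trivial
  simp [Nat.mul_div_cancel _ hpos] at hlt

lemma isMinor_bot_boxProd_top {N : ℕ} {H : SimpleGraph (Fin (t * N))}
    (hl : HereditaryDiamLT H l) (hH : pathGraph (t * N) ≤ H) (hN : l * 4 ^ l < N) :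
    IsMinor ((⊥ : SimpleGraph (Fin t)) □ (⊤ : SimpleGraph (Fin 4))) H := by
  refine isMinor_bot_boxProd finProdFinEquiv.injective fun i ↦ ?_
  let f : Fin N ↪ Fin (t * N) := ⟨fun w ↦ finProdFinEquiv (i, w), fun w w' h ↦
    congrArg Prod.snd (finProdFinEquiv.injective h)⟩
  refine (hl.comap f).isMinor_top_four (fun u v huv ↦ hH ?_) hN
  have hval : ∀ w, (f w : ℕ) = w + N * i := fun w ↦ rfl
  rw [pathGraph_adj] at huv ⊢
  rw [hval, hval]
  lia

lemma isMinor_bouquet_of_fan (hl : HereditaryDiamLT H l) (hH : pathGraph N ≤ H) {m : ℕ}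
    (hm : l * 4 ^ l < m) {n : Fin (t * m + 1) → Fin N} (hn : StrictMono n) {w : Fin N}
    (hw : ∀ i, H.Adj w (n i)) (hside : (∀ i, w < n i) ∨ ∀ i, n i < w) :
    IsMinor (bouquet (Fin t) (⊤ : SimpleGraph (Fin 4))) H := by
  have hmodel := isMinorModel_blockGraph_division hH hn
  have hK := isMinor_bot_boxProd_top (hl.of_isMinorModel_blockGraph hmodel)
    (pathGraph_le_blockGraph_division hH hn) hm
  refine hK.cone.trans (isMinor_cone_of_isMinorModel hmodel (a := w) (fun i hwi ↦ ?_)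
    fun i ↦ ⟨n i.castSucc, ⟨le_rfl, hn i.castSucc_lt_succ⟩, hw _⟩)
  exact hside.elim (fun h ↦ (h _).not_ge hwi.1) fun h ↦ (h _).not_gt hwi.2

lemma ncard_neighborSet_le_of_not_isMinor_bouquet (hl : HereditaryDiamLT H l)
    (hH : pathGraph N ≤ H) {m : ℕ} (hm : l * 4 ^ l < m)
    (hminor : ¬ IsMinor (bouquet (Fin t) (⊤ : SimpleGraph (Fin 4))) H) (w : Fin N) :
    (H.neighborSet w).ncard ≤ 2 * (t * m) := by
  classical
  have hside : ∀ s : Finset (Fin N), (∀ v ∈ s, H.Adj w v) →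
      ((∀ v ∈ s, w < v) ∨ ∀ v ∈ s, v < w) → s.card ≤ t * m := by
    intro s hs hws
    by_contra! hcard
    let n := s.orderEmbOfCardLe hcard
    have hmem : ∀ i, n i ∈ s := s.orderEmbOfCardLe_mem hcard
    exact hminor (isMinor_bouquet_of_fan hl hH hm n.strictMono (fun i ↦ hs _ (hmem i))
      (hws.imp (fun h i ↦ h _ (hmem i)) fun h i ↦ h _ (hmem i)))
  have hunion : H.neighborSet w = ((H.neighborFinset w).filter (w < ·) ∪
      (H.neighborFinset w).filter (· < w) : Finset (Fin N)) := by
    ext v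
    have hne : H.Adj w v → w < v ∨ v < w := fun h ↦ h.ne.lt_or_gt
    simpa [← and_or_left] using hne
  rw [hunion, Set.ncard_coe_finset, two_mul]
  refine (Finset.card_union_le _ _).trans (Nat.add_le_add (hside _ ?_ (.inl ?_))
    (hside _ ?_ (.inr ?_))) <;> simp +contextual

end HamiltonianMinors

section MooreBound

variable {V : Type*} [Finite V] {G : SimpleGraph V} {Δ l : ℕ}

lemma ncard_dist_le_le_pow (hG : G.Connected) (hΔ : ∀ v, (G.neighborSet v).ncard ≤ Δ) (r : V)
    (n : ℕ) : {v | G.dist r v ≤ n}.ncard ≤ (Δ + 1) ^ n := by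
  classical
  have := Fintype.ofFinite V
  induction n with
  | zero => simp [hG.dist_eq_zero_iff]
  | succ n ih =>
    let B := (Finset.univ : Finset V).filter fun v ↦ G.dist r v ≤ n
    have hsub : {v | G.dist r v ≤ n + 1} ⊆ B.biUnion fun v ↦ insert v (G.neighborFinset v) := by
      intro v hv
      simp only [Finset.coe_biUnion, Set.mem_iUnion]
      rcases Nat.le_or_eq_of_le_succ hv with hle | heq
      · exact ⟨v, by simpa [B] using hle, by simp⟩
      · obtain ⟨p, hp⟩ := hG.exists_walk_length_eq_dist r v
        have hlen : p.length = n + 1 := hp.trans heq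
        have hadj : G.Adj (p.getVert n) v := by
          simpa [← hlen] using p.adj_getVert_succ (i := n) (by lia)
        have hdist := dist_getVert_of_length_eq_dist hp (i := n) (by lia)
        exact ⟨p.getVert n, by simpa [B] using hdist.le, by simpa using .inr hadj⟩
    have hcard : ∀ v ∈ B, (insert v (G.neighborFinset v)).card ≤ Δ + 1 := fun v _ ↦
      (Finset.card_insert_le _ _).trans (Nat.succ_le_succ
        ((Set.ncard_eq_toFinset_card' _).symm.trans_le (hΔ v)))
    calc {v | G.dist r v ≤ n + 1}.ncard
        ≤ (B.biUnion fun v ↦ insert v (G.neighborFinset v)).card := by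
          rw [← Set.ncard_coe_finset]
          exact Set.ncard_le_ncard hsub
      _ ≤ B.card * (Δ + 1) := Finset.card_biUnion_le_card_mul _ _ _ hcard
      _ ≤ (Δ + 1) ^ (n + 1) := by
          rw [pow_succ]
          refine Nat.mul_le_mul_right _ ?_
          rwa [← Set.ncard_coe_finset, Finset.coe_filter_univ]

end MooreBound

/-- A minor of `G` with a Hamiltonian path and hereditary diameter less than `l` has at most `T`
vertices. -/
def HamMinorBound {V : Type*} (G : SimpleGraph V) (l T : ℕ) : Prop :=
  ∀ (N : ℕ) (H : SimpleGraph (Fin N)), pathGraph N ≤ H → HereditaryDiamLT H l → IsMinor H G →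
    N ≤ T

lemma mul_four_pow_lt_eight_pow (l : ℕ) : l * 4 ^ l < 8 ^ l := by
  calc l * 4 ^ l < 2 ^ l * 4 ^ l := Nat.mul_lt_mul_of_pos_right l.lt_two_pow_self (by positivity)
    _ = 8 ^ l := by rw [← mul_pow]; norm_num

lemma hamMinorBound_of_not_isMinor_bouquet {V : Type*} {G : SimpleGraph V} {t : ℕ}
    (hG : ¬ IsMinor (bouquet (Fin t) (⊤ : SimpleGraph (Fin 4))) G) (l : ℕ) :
    HamMinorBound G l ((2 * (t * 8 ^ l) + 1) ^ l) := by
  intro N H hH hl hHG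
  obtain _ | N := N
  · exact Nat.zero_le _
  have hconn : H.Connected := (pathGraph_connected N).mono hH
  have hdegree := ncard_neighborSet_le_of_not_isMinor_bouquet hl hH (mul_four_pow_lt_eight_pow l)
    fun h ↦ hG (h.trans hHG)
  have hball : {v | H.dist 0 v ≤ l} = Set.univ := Set.eq_univ_of_forall fun v ↦ by
    have hlt := hl.lt_add_of_forall_adj (φ := H.dist 0)
      (connected_induce_of_ordConnected hH Set.ordConnected_univ ⟨0, trivial⟩)
      (fun u _ v _ huv ↦ hconn.dist_triangle.trans_eq (congrArg _ (dist_eq_one_iff_adj.mpr huv)))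
      (Set.mem_univ 0) (Set.mem_univ v)
    rw [dist_self, zero_add] at hlt
    exact hlt.le
  simpa [hball, Set.ncard_univ] using ncard_dist_le_le_pow hconn hdegree 0 l

section EdgeBoundary

open scoped Classical

variable {U : Type*} [Fintype U] {H : SimpleGraph U}

/-- The boundary map from edge chains to vertex chains of `H` over `ZMod 2`; its kernel is the
cycle space of `H`. -/
noncomputable def edgeBoundary (H : SimpleGraph U) :
    (H.edgeSet → ZMod 2) →ₗ[ZMod 2] (U → ZMod 2) where
  toFun z u := ∑ e : H.edgeSet, if u ∈ (e : Sym2 U) then z e else 0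
  map_add' x y := by
    funext u
    simp only [Pi.add_apply, ← Finset.sum_add_distrib]
    exact Finset.sum_congr rfl fun e _ ↦ by split_ifs <;> simp
  map_smul' c x := by
    funext u
    simp only [Pi.smul_apply, smul_eq_mul, RingHom.id_apply, Finset.mul_sum, mul_ite, mul_zero]

lemma edgeBoundary_apply (z : H.edgeSet → ZMod 2) (u : U) :
    edgeBoundary H z u = ∑ e : H.edgeSet, if u ∈ (e : Sym2 U) then z e else 0 := rfl

lemma edgeBoundary_single {a b : U} (h : H.Adj a b) :
    edgeBoundary H (Pi.single ⟨s(a, b), h⟩ 1) = Pi.single a 1 + Pi.single b 1 := by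
  funext u
  rw [edgeBoundary_apply, Finset.sum_eq_single (⟨s(a, b), h⟩ : H.edgeSet)
    (fun e _ he ↦ by simp [he]) (by simp)]
  have hab := h.ne
  by_cases hua : u = a
  · subst hua; simp [hab]
  · by_cases hub : u = b <;> simp [hua, hub, hab.symm]

lemma sum_edgeBoundary (z : H.edgeSet → ZMod 2) (s : Finset U) :
    ∑ u ∈ s, edgeBoundary H z u =
      ∑ e : H.edgeSet, (s.filter (· ∈ (e : Sym2 U))).card • z e := by
  simp only [edgeBoundary_apply]
  rw [Finset.sum_comm]
  simp only [← Finset.sum_filter, Finset.sum_const]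

lemma card_filter_mem_edge (e : H.edgeSet) :
    (Finset.univ.filter (· ∈ (e : Sym2 U))).card = 2 := by
  have hfilter : Finset.univ.filter (· ∈ (e : Sym2 U)) = (e : Sym2 U).toFinset := by
    ext u
    simp
  rw [hfilter, Sym2.card_toFinset_of_not_isDiag _ (H.not_isDiag_of_mem_edgeSet e.2)]

lemma sum_univ_edgeBoundary (z : H.edgeSet → ZMod 2) : ∑ u, edgeBoundary H z u = 0 := by
  rw [sum_edgeBoundary]
  refine Finset.sum_eq_zero fun e _ ↦ ?_
  rw [card_filter_mem_edge]
  exact CharTwo.two_nsmul _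

lemma exists_edgeBoundary_eq_of_walk {u v : U} (p : H.Walk u v) :
    ∃ z : H.edgeSet → ZMod 2, (∀ e, z e ≠ 0 → (e : Sym2 U) ∈ p.edges) ∧
      edgeBoundary H z = Pi.single u 1 + Pi.single v 1 := by
  induction p with
  | nil => exact ⟨0, by simp, by rw [map_zero, ZModModule.add_self]⟩
  | @cons u w v h p ih =>
    obtain ⟨z, hz, hzv⟩ := ih
    refine ⟨Pi.single ⟨s(u, w), h⟩ 1 + z, fun e he ↦ ?_, ?_⟩
    · rw [Walk.edges_cons, List.mem_cons]
      by_cases hew : e = ⟨s(u, w), h⟩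
      · exact Or.inl (congrArg Subtype.val hew)
      · exact Or.inr (hz e (by simpa [hew] using he))
    · rw [map_add, edgeBoundary_single, hzv]
      linear_combination ZModModule.add_self (Pi.single w 1 : U → ZMod 2)

lemma exists_edgeBoundary_eq_of_connected {S : Set U} (hS : (H.induce S).Connected)
    {f : U → ZMod 2} (hf : ∀ u ∉ S, f u = 0) (hsum : ∑ u, f u = 0) :
    ∃ z : H.edgeSet → ZMod 2, (∀ e, z e ≠ 0 → ∀ u ∈ (e : Sym2 U), u ∈ S) ∧
      edgeBoundary H z = f := by
  obtain ⟨r⟩ := hS.nonempty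
  have hpath (u : U) : ∃ z : H.edgeSet → ZMod 2,
      (∀ e, z e ≠ 0 → ∀ x ∈ (e : Sym2 U), x ∈ S) ∧
        f u • edgeBoundary H z = f u • (Pi.single u 1 + Pi.single r.1 1) := by
    by_cases hu : u ∈ S
    · obtain ⟨p⟩ := hS.preconnected ⟨u, hu⟩ r
      obtain ⟨z, hz, hzu⟩ := exists_edgeBoundary_eq_of_walk (p.map (Embedding.induce S).toHom)
      refine ⟨z, fun e he x hx ↦ ?_, by rw [hzu]; rfl⟩
      have hxp := (Walk.mem_support_of_mem_edges (hz e he) hx)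
      rw [Walk.support_map, List.mem_map] at hxp
      obtain ⟨y, -, rfl⟩ := hxp
      exact y.2
    · exact ⟨0, by simp, by simp [hf u hu]⟩
  choose z hz hzu using hpath
  refine ⟨∑ u, f u • z u, fun e he ↦ ?_, ?_⟩
  · rw [Finset.sum_apply] at he
    obtain ⟨u, -, hu⟩ := Finset.exists_ne_zero_of_sum_ne_zero he
    exact hz u e (right_ne_zero_of_mul hu)
  · simp only [map_sum, map_smul, hzu, smul_add, Finset.sum_add_distrib, ← Finset.sum_smul, hsum,
      zero_smul, add_zero]
    exact (pi_eq_sum_univ' f).symm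

lemma card_edgeSet_lt_finrank_ker_edgeBoundary_add_card [Nonempty U] (H : SimpleGraph U) :
    Nat.card H.edgeSet <
      Module.finrank (ZMod 2) (LinearMap.ker (edgeBoundary H)) + Nat.card U := by
  have hne : LinearMap.range (edgeBoundary H) ≠ ⊤ := by
    intro htop
    obtain ⟨u⟩ := ‹Nonempty U›
    obtain ⟨z, hz⟩ := LinearMap.range_eq_top.1 htop (Pi.single u 1)
    have hsum := sum_univ_edgeBoundary z
    rw [hz, Finset.sum_pi_single'] at hsum
    simp at hsum
  have hlt := Submodule.finrank_lt hne
  have hrank := LinearMap.finrank_range_add_finrank_ker (edgeBoundary H)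
  simp only [Module.finrank_fintype_fun_eq_card, ← Nat.card_eq_fintype_card] at hlt hrank
  lia

lemma finrank_ker_edgeBoundary_add_card_le (H : SimpleGraph U) :
    Module.finrank (ZMod 2) (LinearMap.ker (edgeBoundary H)) + Nat.card U ≤
      Nat.card H.edgeSet + Nat.card H.ConnectedComponent := by
  set root : H.ConnectedComponent → (U → ZMod 2) := fun c ↦ Pi.single c.out 1
  have hspan : LinearMap.range (edgeBoundary H) ⊔ Submodule.span (ZMod 2) (Set.range root) = ⊤ := by
    rw [eq_top_iff, ← (Pi.basisFun (ZMod 2) U).span_eq, Submodule.span_le]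
    rintro _ ⟨v, rfl⟩
    obtain ⟨p⟩ : H.Reachable v (H.connectedComponentMk v).out :=
      ConnectedComponent.exact (Quot.out_eq _).symm
    obtain ⟨z, -, hz⟩ := exists_edgeBoundary_eq_of_walk p
    have hv : Pi.basisFun (ZMod 2) U v = edgeBoundary H z + root (H.connectedComponentMk v) := by
      rw [hz, add_assoc, ZModModule.add_self, add_zero, Pi.basisFun_apply]
    rw [hv]
    exact Submodule.add_mem_sup ⟨z, rfl⟩ (Submodule.subset_span ⟨_, rfl⟩)
  have hadd := Submodule.finrank_add_le_finrank_add_finrank (LinearMap.range (edgeBoundary H))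
    (Submodule.span (ZMod 2) (Set.range root))
  have hroot : Module.finrank (ZMod 2) (Submodule.span (ZMod 2) (Set.range root)) ≤ _ :=
    finrank_range_le_card (R := ZMod 2) root
  have hrank := LinearMap.finrank_range_add_finrank_ker (edgeBoundary H)
  rw [hspan, finrank_top] at hadd
  simp only [Module.finrank_fintype_fun_eq_card, ← Nat.card_eq_fintype_card] at hadd hroot hrank
  lia

end EdgeBoundary

namespace EmbScheme

variable {U : Type*} {H : SimpleGraph U} (S : EmbScheme H)

/-- The involution on the states of the face-tracing procedure that traverses the same side of an
edge in the opposite direction. -/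
def rev (x : H.Dart × Bool) : H.Dart × Bool :=
  (x.1.symm, !(xor x.2 (S.sign x.1.edge)))

lemma rev_rev (x : H.Dart × Bool) : S.rev (S.rev x) = x := by
  obtain ⟨d, b⟩ := x
  simp only [rev, Dart.symm_symm, Dart.edge_symm]
  cases b <;> cases S.sign d.edge <;> rfl

lemma faceStep_rev_faceStep (x : H.Dart × Bool) : S.faceStep (S.rev (S.faceStep x)) = S.rev x := by
  obtain ⟨d, b⟩ := x
  simp only [rev, faceStep, Dart.symm_symm, Dart.edge_symm]
  cases xor b (S.sign d.edge) <;> simp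

lemma faceStep_fst_fst (x : H.Dart × Bool) : (S.faceStep x).1.fst = x.1.snd := by
  have hsymm (d : H.Dart) : (S.rot.symm d).fst = d.fst := by
    rw [← S.rot_fst, Equiv.apply_symm_apply]
  simp only [faceStep]
  split_ifs
  · exact hsymm _
  · exact S.rot_fst _

/-- The orbits of the face-tracing step. Each face consists of two of them, one for each direction
in which its boundary can be traversed. -/
def orbitSetoid : Setoid (H.Dart × Bool) :=
  Relation.EqvGen.setoid fun x y ↦ S.faceStep x = y

/-- The relation generating the faces: a face is traced in both directions. -/
def FaceRel (x y : H.Dart × Bool) : Prop := S.faceStep x = y ∨ S.rev x = y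

/-- The faces of an embedding scheme, apart from those that consist of an isolated vertex. -/
def Face : Type _ := Quot S.FaceRel

/-- The face to the side `b` of the dart `d`. -/
def face (d : H.Dart) (b : Bool) : S.Face := Quot.mk _ (d, b)

lemma face_eq_face_symm (d : H.Dart) (b : Bool) :
    S.face d b = S.face d.symm (!(xor b (S.sign d.edge))) :=
  Quot.sound (r := S.FaceRel) (Or.inr rfl)

lemma face_rot (d : H.Dart) : S.face (S.rot d) false = S.face d true := by
  rw [face_eq_face_symm S d]
  refine (Quot.sound (r := S.FaceRel) (Or.inl ?_)).symm
  simp only [faceStep, Dart.symm_symm, Dart.edge_symm]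
  cases S.sign d.edge <;> simp

variable {S}

lemma orbitSetoid_rev {x y : H.Dart × Bool} (h : S.orbitSetoid x y) :
    S.orbitSetoid (S.rev x) (S.rev y) := by
  induction h with
  | rel x y hxy =>
    subst hxy
    rw [← S.faceStep_rev_faceStep x]
    exact S.orbitSetoid.symm (.rel _ _ rfl)
  | refl => exact S.orbitSetoid.refl _
  | symm _ _ _ ih => exact S.orbitSetoid.symm ih
  | trans _ _ _ _ _ ih₁ ih₂ => exact S.orbitSetoid.trans ih₁ ih₂

lemma orbitSetoid_or_of_face_eq {x y : H.Dart × Bool}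
    (h : Quot.mk S.FaceRel x = Quot.mk S.FaceRel y) :
    S.orbitSetoid x y ∨ S.orbitSetoid (S.rev x) y := by
  have hgen := Quot.eqvGen_exact h
  clear h
  induction hgen with
  | rel x y hxy =>
    rcases hxy with rfl | rfl
    · exact Or.inl (.rel _ _ rfl)
    · exact Or.inr (.refl _)
  | refl => exact Or.inl (.refl _)
  | symm x y _ ih =>
    refine ih.imp S.orbitSetoid.symm fun h ↦ S.orbitSetoid.symm ?_
    simpa only [rev_rev] using orbitSetoid_rev h
  | trans x y z _ _ ih₁ ih₂ =>
    rcases ih₁ with h₁ | h₁ <;> rcases ih₂ with h₂ | h₂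
    · exact Or.inl (S.orbitSetoid.trans h₁ h₂)
    · exact Or.inr (S.orbitSetoid.trans (orbitSetoid_rev h₁) h₂)
    · exact Or.inr (S.orbitSetoid.trans h₁ h₂)
    · refine Or.inl (S.orbitSetoid.trans ?_ h₂)
      simpa only [rev_rev] using orbitSetoid_rev h₁

instance [Finite U] : Finite S.Face := by
  have : Finite H.Dart := Finite.of_injective _ (Dart.toProd_injective)
  exact Quot.finite _

lemma orbitCount_faceStep_le [Finite U] (S : EmbScheme H) :
    orbitCount S.faceStep ≤ 2 * Nat.card S.Face := by
  let orbit : S.Face × Bool → Quotient S.orbitSetoid := fun p ↦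
    if p.2 then ⟦p.1.out⟧ else ⟦S.rev p.1.out⟧
  have horbit : Function.Surjective orbit := by
    intro o
    induction o using Quotient.ind with | _ x
    let F : S.Face := Quot.mk _ x
    rcases orbitSetoid_or_of_face_eq (x := F.out) (y := x) (Quot.out_eq F) with h | h
    · exact ⟨(F, true), Quotient.sound h⟩
    · exact ⟨(F, false), Quotient.sound h⟩
  have hcard := Nat.card_le_card_of_surjective orbit horbit
  rw [Nat.card_prod, Nat.card_eq_fintype_card (α := Bool), Fintype.card_bool, mul_comm] at hcard
  exact hcard

section ConstantOnComponents

variable {α : Type*} {X : S.Face → α}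

lemma apply_face_eq_apply_face_false (hX : ∀ d, X (S.face d false) = X (S.face d true))
    (d : H.Dart) (b : Bool) : X (S.face d b) = X (S.face d false) := by
  cases b
  · rfl
  · exact (hX d).symm

lemma apply_face_eq_of_fst_eq (hX : ∀ d, X (S.face d false) = X (S.face d true)) {d d' : H.Dart}
    (h : d.fst = d'.fst) : X (S.face d false) = X (S.face d' false) := by
  obtain ⟨n, rfl⟩ := S.rot_cyclic d d' h
  induction n with
  | zero => rfl
  | succ n ih =>
    rw [pow_succ', Equiv.Perm.mul_apply, face_rot, ← hX]
    exact ih (by rw [h, pow_succ', Equiv.Perm.mul_apply, S.rot_fst])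

lemma apply_face_eq_of_walk (hX : ∀ d, X (S.face d false) = X (S.face d true)) {u v : U}
    (p : H.Walk u v) {d d' : H.Dart} (hd : d.fst = u) (hd' : d'.fst = v) :
    X (S.face d false) = X (S.face d' false) := by
  induction p generalizing d with
  | nil => exact apply_face_eq_of_fst_eq hX (hd.trans hd'.symm)
  | @cons u w v h _ ih =>
    let e : H.Dart := ⟨(u, w), h⟩
    calc X (S.face d false) = X (S.face e false) := apply_face_eq_of_fst_eq hX hd
      _ = X (S.face e.symm false) := by
        rw [face_eq_face_symm, apply_face_eq_apply_face_false hX]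
      _ = X (S.face d' false) := ih rfl hd'

end ConstantOnComponents

/-- The faces of an embedding scheme, including one for each isolated vertex. -/
abbrev Cell (S : EmbScheme H) : Type _ := S.Face ⊕ {v : U | ∀ w, ¬ H.Adj v w}

/-- The connected component of `H` that a face borders. -/
def Cell.component : S.Cell → H.ConnectedComponent :=
  Sum.elim
    (Quot.lift (fun x ↦ H.connectedComponentMk x.1.fst) (by
      rintro x _ (rfl | rfl)
      · rw [faceStep_fst_fst]
        exact ConnectedComponent.sound x.1.adj.reachable
      · exact ConnectedComponent.sound x.1.adj.reachable))
    (fun v ↦ H.connectedComponentMk v)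

lemma Cell.factorsThrough_component {α : Type*} {X : S.Cell → α}
    (hX : ∀ d, X (.inl (S.face d false)) = X (.inl (S.face d true))) :
    X.FactorsThrough Cell.component := by
  have hiso {v u : U} (hv : ∀ w, ¬ H.Adj v w) (h : H.Reachable v u) : v = u := by
    obtain ⟨p⟩ := h
    cases p with
    | nil => rfl
    | cons h => exact absurd h (hv _)
  rintro (a | a) (b | b) hab
  · induction a using Quot.ind with | _ a
    induction b using Quot.ind with | _ b
    obtain ⟨p⟩ := ConnectedComponent.exact hab
    have hXf : ∀ d, (X ∘ .inl) (S.face d false) = (X ∘ .inl) (S.face d true) := hX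
    calc (X ∘ .inl) (S.face a.1 a.2) = (X ∘ .inl) (S.face a.1 false) :=
          apply_face_eq_apply_face_false hXf _ _
      _ = (X ∘ .inl) (S.face b.1 false) := apply_face_eq_of_walk hXf p rfl rfl
      _ = (X ∘ .inl) (S.face b.1 b.2) := (apply_face_eq_apply_face_false hXf _ _).symm
  · induction a using Quot.ind with | _ a
    have hb := hiso b.2 (ConnectedComponent.exact hab.symm)
    exact absurd (hb ▸ a.1.adj) (b.2 _)
  · induction b using Quot.ind with | _ b
    have ha := hiso a.2 (ConnectedComponent.exact hab)
    exact absurd (ha ▸ b.1.adj) (a.2 _)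
  · have := hiso a.2 (ConnectedComponent.exact hab)
    rw [Subtype.ext this]

end EmbScheme

section SurfaceIncidence

variable {U C : Type*} {H : SimpleGraph U} {g : ℕ}

/-- The boundary map over `ZMod 2` from face chains to edge chains, for a graph in which each edge
`e` lies between the faces `l e` and `r e`. -/
def faceBoundary (l r : H.edgeSet → C) : (C → ZMod 2) →ₗ[ZMod 2] (H.edgeSet → ZMod 2) :=
  LinearMap.funLeft (ZMod 2) (ZMod 2) l + LinearMap.funLeft (ZMod 2) (ZMod 2) r

lemma faceBoundary_apply (l r : H.edgeSet → C) (X : C → ZMod 2) (e : H.edgeSet) :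
    faceBoundary l r X e = X (l e) + X (r e) := rfl

/-- The faces `l e` and `r e` on the two sides of each edge `e` behave, as far as homology over
`ZMod 2` is concerned, like those of an embedding of `H` in a surface of Euler genus at most `g`:
boundaries of face chains are cycles, and any `g + 1` cycles satisfy a nontrivial linear relation
modulo such boundaries. Unlike embeddings, this is easily seen to pass to minors. -/
structure IsSurfaceIncidence [Fintype U] (l r : H.edgeSet → C) (g : ℕ) : Prop where
  edgeBoundary_faceBoundary : ∀ X, edgeBoundary H (faceBoundary l r X) = 0
  exists_sum_eq : ∀ z : Fin (g + 1) → H.edgeSet → ZMod 2, (∀ i, edgeBoundary H (z i) = 0) →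
    ∃ c : Fin (g + 1) → ZMod 2, c ≠ 0 ∧ ∃ X, faceBoundary l r X = ∑ i, c i • z i

lemma exists_linear_relation_mod {K M : Type*} [Field K] [AddCommGroup M] [Module K M]
    [FiniteDimensional K M] {B Z : Submodule K M} (hBZ : B ≤ Z)
    (hrank : Module.finrank K Z ≤ Module.finrank K B + g) (z : Fin (g + 1) → Z) :
    ∃ c : Fin (g + 1) → K, c ≠ 0 ∧ ∑ i, c i • (z i : M) ∈ B := by
  have hdep : ¬ LinearIndependent K fun i ↦ (B.submoduleOf Z).mkQ (z i) := by
    intro hli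
    have hcard := hli.fintype_card_le_finrank
    have hquot := Submodule.finrank_quotient_add_finrank (B.submoduleOf Z)
    rw [(Submodule.submoduleOfEquivOfLe hBZ).finrank_eq] at hquot
    rw [Fintype.card_fin] at hcard
    lia
  obtain ⟨c, hc, i, hi⟩ := Fintype.not_linearIndependent_iff.1 hdep
  refine ⟨c, fun h ↦ hi (congrFun h i), ?_⟩
  have hsum : (B.submoduleOf Z).mkQ (∑ i, c i • z i) = 0 := by
    simpa only [map_sum, map_smul] using hc
  rw [Submodule.mkQ_apply, Submodule.Quotient.mk_eq_zero] at hsum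
  simpa [Submodule.submoduleOf] using hsum

end SurfaceIncidence

namespace EmbScheme

section Dart

variable {U : Type*} {H : SimpleGraph U}

/-- A dart along a given edge. -/
noncomputable def dartOfEdge (e : H.edgeSet) : H.Dart :=
  ⟨e.1.out, by
    have he := e.2
    rwa [← Quot.out_eq e.1] at he⟩

lemma edge_dartOfEdge (e : H.edgeSet) : (dartOfEdge e).edge = e := Quot.out_eq e.1

/-- The face on one side of an edge. -/
noncomputable def leftFace (S : EmbScheme H) (e : H.edgeSet) : S.Face := S.face (dartOfEdge e) false

/-- The face on the other side of an edge. -/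
noncomputable def rightFace (S : EmbScheme H) (e : H.edgeSet) : S.Face := S.face (dartOfEdge e) true

lemma apply_leftFace_add_apply_rightFace {M : Type*} [AddCommMonoid M] (S : EmbScheme H)
    (X : S.Face → M) (d : H.Dart) :
    X (S.leftFace ⟨d.edge, d.edge_mem⟩) + X (S.rightFace ⟨d.edge, d.edge_mem⟩) =
      X (S.face d false) + X (S.face d true) := by
  rcases dart_edge_eq_iff _ _ |>.1 (edge_dartOfEdge ⟨d.edge, d.edge_mem⟩) with h | h
  · rw [leftFace, rightFace, h]
  · rw [leftFace, rightFace, h, S.face_eq_face_symm d false, S.face_eq_face_symm d true]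
    cases S.sign d.edge
    · simp [add_comm]
    · simp

/-- The boundary map on the faces of an embedding scheme. -/
noncomputable def cellBoundary (S : EmbScheme H) :
    (S.Cell → ZMod 2) →ₗ[ZMod 2] (H.edgeSet → ZMod 2) :=
  faceBoundary (.inl ∘ S.leftFace) (.inl ∘ S.rightFace)

lemma cellBoundary_eq (S : EmbScheme H) (X : S.Cell → ZMod 2) :
    S.cellBoundary X = faceBoundary S.leftFace S.rightFace (X ∘ .inl) := rfl

lemma faceBoundary_apply_edge (S : EmbScheme H) (X : S.Face → ZMod 2) (d : H.Dart) :
    faceBoundary S.leftFace S.rightFace X ⟨d.edge, d.edge_mem⟩ =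
      X (S.face d false) + X (S.face d true) :=
  S.apply_leftFace_add_apply_rightFace X d

end Dart

open scoped Classical

variable {U : Type*} {H : SimpleGraph U}

lemma orbitCount_add_card_le [Finite U] (S : EmbScheme H) :
    orbitCount S.faceStep / 2 + Nat.card {v : U | ∀ w, ¬ H.Adj v w} ≤
      Module.finrank (ZMod 2) (LinearMap.range S.cellBoundary) +
        Nat.card H.ConnectedComponent := by
  have := Fintype.ofFinite U
  have := Fintype.ofFinite S.Face
  have hker : LinearMap.ker S.cellBoundary ≤
      LinearMap.range (LinearMap.funLeft (ZMod 2) (ZMod 2) (Cell.component (S := S))) := by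
    intro X hX
    have hfactor : X.FactorsThrough Cell.component := Cell.factorsThrough_component fun d ↦ by
      have hd := faceBoundary_apply_edge S (X ∘ .inl) d
      rw [← cellBoundary_eq, LinearMap.mem_ker.1 hX] at hd
      exact CharTwo.add_eq_zero.1 hd.symm
    exact ⟨Function.extend Cell.component X 0, funext (hfactor.extend_apply _)⟩
  have hker_le := Submodule.finrank_mono hker
  have hrange_le := LinearMap.finrank_range_le
    (LinearMap.funLeft (ZMod 2) (ZMod 2) (Cell.component (S := S)))
  have hrank := LinearMap.finrank_range_add_finrank_ker S.cellBoundary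
  have horbit := S.orbitCount_faceStep_le
  simp only [Module.finrank_fintype_fun_eq_card, ← Nat.card_eq_fintype_card, Nat.card_sum]
    at hrank hrange_le
  lia

variable [Fintype U]

lemma edgeBoundary_eq_sum_darts (z : H.edgeSet → ZMod 2) (u : U) :
    edgeBoundary H z u = ∑ d : H.Dart with d.fst = u, z ⟨d.edge, d.edge_mem⟩ := by
  rw [edgeBoundary_apply, ← Finset.sum_filter]
  symm
  refine Finset.sum_bij (fun d _ ↦ ⟨d.edge, d.edge_mem⟩) ?_ ?_ ?_ fun _ _ ↦ rfl
  · intro d hd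
    simp only [Finset.mem_filter_univ] at hd ⊢
    exact hd ▸ Sym2.mem_mk_left _ _
  · intro d hd d' hd' h
    simp only [Finset.mem_filter_univ] at hd hd'
    rcases (dart_edge_eq_iff _ _).1 (congrArg Subtype.val h) with h | rfl
    · exact h
    · exact absurd (hd'.trans hd.symm) d'.adj.ne
  · rintro ⟨e, he⟩ hu
    simp only [Finset.mem_filter_univ] at hu
    obtain ⟨v, rfl⟩ := Sym2.mem_iff_exists.1 hu
    exact ⟨⟨(u, v), he⟩, by simp, rfl⟩

lemma edgeBoundary_faceBoundary (S : EmbScheme H) (X : S.Face → ZMod 2) :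
    edgeBoundary H (faceBoundary S.leftFace S.rightFace X) = 0 := by
  funext u
  rw [edgeBoundary_eq_sum_darts]
  simp only [faceBoundary_apply_edge, Finset.sum_add_distrib, Pi.zero_apply]
  have hrot : ∑ d : H.Dart with d.fst = u, X (S.face d true) =
      ∑ d : H.Dart with d.fst = u, X (S.face d false) :=
    Finset.sum_equiv S.rot (fun d ↦ by simp [S.rot_fst]) fun d _ ↦ by rw [face_rot]
  rw [hrot]
  exact CharTwo.add_self_eq_zero _

lemma GenusLE.isSurfaceIncidence {S : EmbScheme H} {g : ℕ} (hS : S.GenusLE g) :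
    IsSurfaceIncidence S.leftFace S.rightFace g where
  edgeBoundary_faceBoundary := S.edgeBoundary_faceBoundary
  exists_sum_eq z hz := by
    have hle : LinearMap.range S.cellBoundary ≤ LinearMap.ker (edgeBoundary H) := by
      rintro _ ⟨X, rfl⟩
      rw [LinearMap.mem_ker, cellBoundary_eq, S.edgeBoundary_faceBoundary]
    have hcycles := finrank_ker_edgeBoundary_add_card_le H
    have hboundaries := S.orbitCount_add_card_le
    unfold GenusLE at hS
    obtain ⟨c, hc, X, hX⟩ := exists_linear_relation_mod (g := g) hle (by lia)
      fun i ↦ ⟨z i, hz i⟩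
    exact ⟨c, hc, X ∘ .inl, hX⟩

end EmbScheme

section MinorIncidence

open scoped Classical

variable {U W C : Type*} {H : SimpleGraph U} {J : SimpleGraph W} {β : W → Set U}

/-- An edge both of whose ends lie in the same branch set. -/
def IsInnerEdge (β : W → Set U) (e : H.edgeSet) : Prop := ∃ i, ∀ u ∈ (e : Sym2 U), u ∈ β i

/-- Two faces of `H` separated by an edge that is deleted when passing to a minor become one. -/
def FaceMerge (β : W → Set U) (f : J.edgeSet → H.edgeSet) (l r : H.edgeSet → C) (c c' : C) : Prop :=
  ∃ e, ¬ IsInnerEdge β e ∧ e ∉ Set.range f ∧ l e = c ∧ r e = c'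

variable [Fintype U]

/-- The edge map `f` realizes a minor model with branch sets `β`: each edge `ij` of `J` is mapped
to an edge of `H` between `β i` and `β j`. -/
structure IsEdgeModel (β : W → Set U) (f : J.edgeSet → H.edgeSet) : Prop where
  exists_mem : ∀ e, ∀ u ∈ (f e : Sym2 U), ∃ i, u ∈ β i
  card_filter : ∀ i e, (Finset.univ.filter fun u ↦ u ∈ β i ∧ u ∈ (f e : Sym2 U)).card =
    if i ∈ (e : Sym2 W) then 1 else 0

lemma IsMinorModel.exists_isEdgeModel (hβ : IsMinorModel J H β) :
    ∃ f : J.edgeSet → H.edgeSet, IsEdgeModel β f := by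
  have hedge (e : J.edgeSet) : ∃ f : H.edgeSet, (∀ u ∈ (f : Sym2 U), ∃ i, u ∈ β i) ∧
      ∀ i, (Finset.univ.filter fun u ↦ u ∈ β i ∧ u ∈ (f : Sym2 U)).card =
        if i ∈ (e : Sym2 W) then 1 else 0 := by
    obtain ⟨e, he⟩ := e
    induction e with
    | _ i j =>
      obtain ⟨hij, u, hu, v, hv, huv⟩ := hβ.le_blockGraph he
      have hmem {x : U} {a b : W} (ha : x ∈ β a) : x ∈ β b ↔ b = a := by
        refine ⟨fun hb ↦ ?_, fun h ↦ h ▸ ha⟩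
        by_contra hne
        exact Set.disjoint_left.1 (hβ.disjoint b a hne) hb ha
      refine ⟨⟨s(u, v), huv⟩, ?_, fun a ↦ ?_⟩
      · rintro x hx
        rcases Sym2.mem_iff.1 hx with rfl | rfl
        exacts [⟨i, hu⟩, ⟨j, hv⟩]
      · have hfilter : (Finset.univ.filter fun x ↦ x ∈ β a ∧ x ∈ s(u, v)) =
            (if a = i then {u} else ∅) ∪ (if a = j then {v} else ∅) := by
          ext x
          have := hmem hu (b := a)
          have := hmem hv (b := a)
          simp only [Finset.mem_filter_univ, Sym2.mem_iff, Finset.mem_union]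
          split_ifs <;> grind
        rw [hfilter]
        by_cases hai : a = i
        · simp [hai, hij]
        · by_cases haj : a = j <;> simp [hai, haj, hij.symm]
  choose f hf hcard using hedge
  exact ⟨f, hf, fun i e ↦ hcard e i⟩

lemma IsEdgeModel.injective {f : J.edgeSet → H.edgeSet} (hf : IsEdgeModel β f) :
    Function.Injective f := by
  intro e e' h
  refine Subtype.ext (Sym2.ext fun i ↦ ?_)
  have hi := hf.card_filter i e
  rw [h, hf.card_filter i e'] at hi
  split_ifs at hi <;> simp_all

lemma card_filter_of_forall_mem {s : Set U} {e : H.edgeSet} (he : ∀ u ∈ (e : Sym2 U), u ∈ s) :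
    (Finset.univ.filter fun u ↦ u ∈ s ∧ u ∈ (e : Sym2 U)).card = 2 := by
  rw [← card_filter_mem_edge e]
  congr 1
  ext u
  simpa using he u

lemma IsEdgeModel.not_isInnerEdge {f : J.edgeSet → H.edgeSet} (hf : IsEdgeModel β f)
    (e : J.edgeSet) : ¬ IsInnerEdge β (f e) := by
  rintro ⟨i, hi⟩
  have hcard := hf.card_filter i e
  rw [card_filter_of_forall_mem hi] at hcard
  split_ifs at hcard; lia

lemma IsMinorModel.card_smul_of_isInnerEdge (hβ : IsMinorModel J H β) {e : H.edgeSet}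
    (he : IsInnerEdge β e) (i : W) (x : ZMod 2) :
    (Finset.univ.filter fun u ↦ u ∈ β i ∧ u ∈ (e : Sym2 U)).card • x = 0 := by
  obtain ⟨j, hj⟩ := he
  by_cases hij : i = j
  · rw [card_filter_of_forall_mem (hij ▸ hj)]
    exact CharTwo.two_nsmul x
  · rw [Finset.filter_eq_empty_iff.2, Finset.card_empty, zero_smul]
    exact fun u _ hu ↦ Set.disjoint_left.1 (hβ.disjoint i j hij) hu.1 (hj u hu.2)

lemma IsMinorModel.edgeBoundary_comp [Fintype W] (hβ : IsMinorModel J H β)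
    {f : J.edgeSet → H.edgeSet} (hf : IsEdgeModel β f) {z : H.edgeSet → ZMod 2}
    (hz : ∀ e, ¬ IsInnerEdge β e → e ∉ Set.range f → z e = 0) (i : W) :
    edgeBoundary J (z ∘ f) i = ∑ u with u ∈ β i, edgeBoundary H z u := by
  rw [sum_edgeBoundary, edgeBoundary_apply]
  refine Fintype.sum_of_injective f hf.injective _ _ (fun e he ↦ ?_) fun e ↦ ?_
  · rw [Finset.filter_filter]
    by_cases hinner : IsInnerEdge β e
    · exact hβ.card_smul_of_isInnerEdge hinner i _
    · rw [hz e hinner he, smul_zero]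
  · rw [Finset.filter_filter, hf.card_filter, ite_smul, one_smul, zero_smul]
    rfl

lemma IsMinorModel.exists_cycle_comp_eq [Fintype W] (hβ : IsMinorModel J H β)
    {f : J.edgeSet → H.edgeSet} (hf : IsEdgeModel β f) {y : J.edgeSet → ZMod 2}
    (hy : edgeBoundary J y = 0) :
    ∃ z : H.edgeSet → ZMod 2, edgeBoundary H z = 0 ∧ z ∘ f = y ∧
      ∀ e, ¬ IsInnerEdge β e → e ∉ Set.range f → z e = 0 := by
  set z₀ : H.edgeSet → ZMod 2 := Function.extend f y 0
  have hz₀ {e : H.edgeSet} (he : e ∉ Set.range f) : z₀ e = 0 := Function.extend_apply' _ _ _ he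
  have hz₀f : z₀ ∘ f = y := Function.extend_comp hf.injective _ _
  have hconnect (i : W) : ∃ z : H.edgeSet → ZMod 2,
      (∀ e, z e ≠ 0 → ∀ u ∈ (e : Sym2 U), u ∈ β i) ∧
        edgeBoundary H z = fun u ↦ if u ∈ β i then edgeBoundary H z₀ u else 0 := by
    refine exists_edgeBoundary_eq_of_connected (hβ.connected i) (fun u hu ↦ if_neg hu) ?_
    rw [← Finset.sum_filter, ← hβ.edgeBoundary_comp hf (fun e _ he ↦ hz₀ he), hz₀f, hy]
    rfl
  choose z hz hzβ using hconnect
  have hsum_zero {e : H.edgeSet} (he : ¬ IsInnerEdge β e) : ∑ i, z i e = 0 :=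
    Finset.sum_eq_zero fun i _ ↦ by_contra fun h ↦ he ⟨i, hz i e h⟩
  refine ⟨z₀ + ∑ i, z i, ?_, ?_, fun e he hef ↦ ?_⟩
  · funext u
    simp only [map_add, map_sum, hzβ, Pi.add_apply, Finset.sum_apply, Pi.zero_apply]
    by_cases hu : ∃ i, u ∈ β i
    · obtain ⟨i, hi⟩ := hu
      rw [Finset.sum_eq_single i, if_pos hi]
      · exact CharTwo.add_self_eq_zero _
      · exact fun j _ hj ↦ if_neg (Set.disjoint_left.1 (hβ.disjoint i j hj.symm) hi)
      · simp
    · have hu₀ : edgeBoundary H z₀ u = 0 := by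
        refine Finset.sum_eq_zero fun e _ ↦ ?_
        split_ifs with hue
        · exact hz₀ fun ⟨e', he'⟩ ↦ hu (hf.exists_mem e' u (he' ▸ hue))
        · rfl
      simp [hu₀]
  · funext e
    rw [← hz₀f, Function.comp_apply, Pi.add_apply, Finset.sum_apply,
      hsum_zero (hf.not_isInnerEdge e), add_zero, Function.comp_apply]
  · rw [Pi.add_apply, Finset.sum_apply, hz₀ hef, hsum_zero he, add_zero]

lemma IsSurfaceIncidence.of_isMinorModel [Fintype W] {l r : H.edgeSet → C} {g : ℕ}
    (h : IsSurfaceIncidence l r g) (hβ : IsMinorModel J H β) {f : J.edgeSet → H.edgeSet}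
    (hf : IsEdgeModel β f) :
    IsSurfaceIncidence (Quot.mk (FaceMerge β f l r) ∘ l ∘ f)
      (Quot.mk (FaceMerge β f l r) ∘ r ∘ f) g where
  edgeBoundary_faceBoundary X := by
    funext i
    set z := faceBoundary l r (X ∘ Quot.mk (FaceMerge β f l r))
    have hz (e : H.edgeSet) (he : ¬ IsInnerEdge β e) (hef : e ∉ Set.range f) : z e = 0 := by
      have hmerge : Quot.mk (FaceMerge β f l r) (l e) = Quot.mk _ (r e) :=
        Quot.sound ⟨e, he, hef, rfl, rfl⟩
      simp only [z, faceBoundary_apply, Function.comp_apply, hmerge]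
      exact CharTwo.add_self_eq_zero _
    have hcomp := hβ.edgeBoundary_comp hf hz i
    rw [h.edgeBoundary_faceBoundary] at hcomp
    exact hcomp.trans (Finset.sum_const_zero)
  exists_sum_eq y hy := by
    choose z hz hzy hz₀ using fun i ↦ hβ.exists_cycle_comp_eq hf (hy i)
    obtain ⟨c, hc, X, hX⟩ := h.exists_sum_eq z hz
    refine ⟨c, hc, Quot.lift X ?_, ?_⟩
    · rintro _ _ ⟨e, he, hef, rfl, rfl⟩
      refine CharTwo.add_eq_zero.1 ?_
      rw [← faceBoundary_apply, hX, Finset.sum_apply]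
      exact Finset.sum_eq_zero fun i _ ↦ by rw [Pi.smul_apply, hz₀ i e he hef, smul_zero]
    · funext e
      have hXe := congrFun hX (f e)
      simp only [Finset.sum_apply, Pi.smul_apply] at hXe ⊢
      simp only [← hzy]
      exact hXe

end MinorIncidence

section BouquetIncidence

open scoped Classical

variable {V W ι C : Type*} {K : SimpleGraph W}

lemma edgeBoundary_comp_of_injective [Fintype V] [Fintype W] {G : SimpleGraph V}
    {f : K.edgeSet → G.edgeSet} (hf : Function.Injective f) {w : W} {v : V}
    (hmem : ∀ e, v ∈ (f e : Sym2 V) ↔ w ∈ (e : Sym2 W)) {z : G.edgeSet → ZMod 2}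
    (hz : ∀ e ∉ Set.range f, v ∈ (e : Sym2 V) → z e = 0) :
    edgeBoundary K (z ∘ f) w = edgeBoundary G z v := by
  simp only [edgeBoundary_apply]
  refine Fintype.sum_of_injective f hf _ _ (fun e he ↦ ?_) fun e ↦ ?_
  · exact ite_eq_right_iff.2 (hz e he)
  · simp only [hmem, Function.comp_apply]

lemma edgeBoundary_extend_mapEdgeSet [Fintype V] [Fintype W] {G : SimpleGraph V} (φ : K ↪g G)
    {y : K.edgeSet → ZMod 2} (hy : edgeBoundary K y = 0) :
    edgeBoundary G (Function.extend φ.mapEdgeSet y 0) = 0 := by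
  funext v
  have hz {e : G.edgeSet} (he : e ∉ Set.range φ.mapEdgeSet) :
      Function.extend φ.mapEdgeSet y 0 e = 0 := Function.extend_apply' _ _ _ he
  by_cases hv : ∃ w, φ w = v
  · obtain ⟨w, rfl⟩ := hv
    have hmem (e : K.edgeSet) : φ w ∈ (φ.mapEdgeSet e : Sym2 V) ↔ w ∈ (e : Sym2 W) := by
      change φ w ∈ Sym2.map φ e ↔ _
      simp [Sym2.mem_map]
    rw [← edgeBoundary_comp_of_injective φ.mapEdgeSet.injective hmem fun e he _ ↦ hz he,
      Function.extend_comp φ.mapEdgeSet.injective, hy]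
    rfl
  · refine Finset.sum_eq_zero fun e _ ↦ ite_eq_right_iff.2 fun hve ↦ hz ?_
    rintro ⟨e, rfl⟩
    obtain ⟨w, -, rfl⟩ := Sym2.mem_map.1 hve
    exact hv ⟨w, rfl⟩

/-- The embedding of `cone K` as one of the copies in a bouquet. -/
def bouquetCopy (K : SimpleGraph W) (i : ι) : cone K ↪g bouquet ι K where
  toFun := Option.map (i, ·)
  inj' := Option.map_injective (Prod.mk_right_injective i)
  map_rel_iff' := by
    rintro (_ | u) (_ | v) <;> simp [cone]

lemma eq_of_mapEdgeSet_bouquetCopy_eq {i j : ι} {e e' : (cone K).edgeSet}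
    (h : (bouquetCopy K i).mapEdgeSet e = (bouquetCopy K j).mapEdgeSet e') : i = j := by
  have hsome : ∃ w, some w ∈ (e : Sym2 (Option W)) := by
    obtain ⟨e, he⟩ := e
    induction e with
    | _ x y =>
      rcases x with _ | w
      · rcases y with _ | w
        exacts [he.elim, ⟨w, Sym2.mem_mk_right _ _⟩]
      · exact ⟨w, Sym2.mem_mk_left _ _⟩
  obtain ⟨w, hw⟩ := hsome
  have hmem : some (i, w) ∈ ((bouquetCopy K j).mapEdgeSet e' : Sym2 (Option (ι × W))) :=
    h ▸ Sym2.mem_map.2 ⟨some w, hw, rfl⟩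
  obtain ⟨_ | w', -, hw'⟩ := Sym2.mem_map.1 hmem
  · exact absurd hw' (by simp [bouquetCopy])
  · exact (congrArg Prod.fst (Option.some.inj hw')).symm

lemma edgeBoundary_comp_bouquetCopy [Fintype W] [Fintype ι] {i : ι}
    {z : (bouquet ι K).edgeSet → ZMod 2} (hz : edgeBoundary (bouquet ι K) z = 0) :
    edgeBoundary (cone K) (z ∘ (bouquetCopy K i).mapEdgeSet) = 0 := by
  have hsome (w : W) :
      edgeBoundary (cone K) (z ∘ (bouquetCopy K i).mapEdgeSet) (some w) = 0 := by
    rw [edgeBoundary_comp_of_injective (v := some (i, w)) (bouquetCopy K i).mapEdgeSet.injective,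
      hz, Pi.zero_apply]
    · intro e
      exact Sym2.mem_map.trans (by simp [bouquetCopy])
    · rintro ⟨e, he⟩ hrange hmem
      obtain ⟨v, rfl⟩ := Sym2.mem_iff_exists.1 hmem
      refine absurd ?_ hrange
      rcases v with _ | ⟨j, v⟩
      · exact ⟨⟨s(some w, none), trivial⟩, rfl⟩
      · rcases boxProd_adj.1 he with ⟨h, -⟩ | ⟨h, rfl⟩
        · exact h.elim
        · exact ⟨⟨s(some w, some v), h⟩, rfl⟩
  have hsum := sum_univ_edgeBoundary (z ∘ (bouquetCopy K i).mapEdgeSet)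
  simp only [Fintype.sum_option, hsome, Finset.sum_const_zero, add_zero] at hsum
  funext x
  cases x
  exacts [hsum, hsome _]

lemma IsSurfaceIncidence.exists_bouquetCopy [Fintype W] {g : ℕ}
    {l r : (bouquet (Fin (g + 1)) K).edgeSet → C} (h : IsSurfaceIncidence l r g) :
    ∃ i, IsSurfaceIncidence (l ∘ (bouquetCopy K i).mapEdgeSet)
      (r ∘ (bouquetCopy K i).mapEdgeSet) 0 := by
  have hcycle (i : Fin (g + 1)) (X : C → ZMod 2) : edgeBoundary (cone K)
      (faceBoundary (l ∘ (bouquetCopy K i).mapEdgeSet) (r ∘ (bouquetCopy K i).mapEdgeSet) X) = 0 :=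
    edgeBoundary_comp_bouquetCopy (h.edgeBoundary_faceBoundary X)
  by_contra! hcon
  have hbad (i : Fin (g + 1)) : ∃ y : (cone K).edgeSet → ZMod 2, edgeBoundary (cone K) y = 0 ∧
      ∀ X, faceBoundary (l ∘ (bouquetCopy K i).mapEdgeSet)
        (r ∘ (bouquetCopy K i).mapEdgeSet) X ≠ y := by
    by_contra! hgood
    refine hcon i ⟨hcycle i, fun z hz ↦ ⟨1, one_ne_zero, ?_⟩⟩
    simpa using hgood (z 0) (hz 0)
  choose y hy hyX using hbad
  obtain ⟨c, hc, X, hX⟩ := h.exists_sum_eq _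
    fun i ↦ edgeBoundary_extend_mapEdgeSet (bouquetCopy K i) (hy i)
  obtain ⟨i, hi⟩ := Function.ne_iff.1 hc
  refine hyX i X (funext fun e ↦ ?_)
  have hXe := congrFun hX ((bouquetCopy K i).mapEdgeSet e)
  rw [Finset.sum_apply, Finset.sum_eq_single i] at hXe
  · have hci : c i = 1 := Fin.eq_one_of_ne_zero (c i) hi
    rw [Pi.smul_apply, (bouquetCopy K i).mapEdgeSet.injective.extend_apply, hci, one_smul] at hXe
    exact hXe
  · intro j _ hj
    rw [Pi.smul_apply, Function.extend_apply', Pi.zero_apply, smul_zero]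
    rintro ⟨e', he'⟩
    exact hj (eq_of_mapEdgeSet_bouquetCopy_eq he')
  · simp

end BouquetIncidence

section Planarity

open scoped Classical

lemma finrank_span_range_lt_card {ι K M : Type*} [Field K] [AddCommGroup M] [Module K M]
    [Fintype ι] [Nonempty ι] {b : ι → M} (hb : ∑ i, b i = 0) :
    Module.finrank K (Submodule.span K (Set.range b)) < Fintype.card ι := by
  refine (finrank_range_le_card b).lt_of_ne fun hcard ↦ ?_
  have hli := linearIndependent_iff_card_eq_finrank_span.2 hcard.symm
  have hone := Fintype.linearIndependent_iff.1 hli 1 (by simpa using hb) (Classical.arbitrary ι)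
  exact one_ne_zero hone

variable {U C : Type*} {H : SimpleGraph U}

lemma faceBoundary_eq_sum [Fintype C] (l r : H.edgeSet → C) (X : C → ZMod 2) :
    faceBoundary l r X = ∑ c, X c • faceBoundary l r (Pi.single c 1) := by
  conv_lhs => rw [pi_eq_sum_univ' X]
  simp only [map_sum, map_smul]

variable [Fintype U]

lemma exists_ne_of_edgeBoundary_apply_eq_zero {z : H.edgeSet → ZMod 2} {u : U}
    (hz : edgeBoundary H z u = 0) {e : H.edgeSet} (hu : u ∈ (e : Sym2 U)) (he : z e ≠ 0) :
    ∃ e' ≠ e, u ∈ (e' : Sym2 U) ∧ z e' ≠ 0 := by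
  by_contra! hcon
  rw [edgeBoundary_apply, Finset.sum_eq_single e, if_pos hu] at hz
  · exact he hz
  · exact fun e' _ hne ↦ ite_eq_right_iff.2 (hcon e' hne)
  · simp

lemma three_le_card_support_of_edgeBoundary_eq_zero {z : H.edgeSet → ZMod 2}
    (hz : edgeBoundary H z = 0) (hne : z ≠ 0) : 3 ≤ (Finset.univ.filter (z · ≠ 0)).card := by
  obtain ⟨⟨e, he⟩, hze⟩ := Function.ne_iff.1 hne
  induction e with
  | _ a b =>
    have hab : a ≠ b := he.ne
    obtain ⟨e₁, hne₁, ha, hze₁⟩ :=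
      exists_ne_of_edgeBoundary_apply_eq_zero (congrFun hz a) (Sym2.mem_mk_left a b) hze
    obtain ⟨e₂, hne₂, hb, hze₂⟩ :=
      exists_ne_of_edgeBoundary_apply_eq_zero (congrFun hz b) (Sym2.mem_mk_right a b) hze
    have hne₁₂ : e₁ ≠ e₂ := fun h ↦
      hne₁ (Subtype.ext ((Sym2.mem_and_mem_iff hab).1 ⟨ha, h ▸ hb⟩))
    rw [← Finset.card_eq_three.2 ⟨_, _, _, hne₁.symm, hne₂.symm, hne₁₂, rfl⟩]
    refine Finset.card_le_card fun e he ↦ ?_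
    simp only [Finset.mem_insert, Finset.mem_singleton] at he
    rw [Finset.mem_filter_univ]
    rcases he with rfl | rfl | rfl <;> assumption

lemma IsSurfaceIncidence.exists_faceBoundary_eq {l r : H.edgeSet → C}
    (h : IsSurfaceIncidence l r 0) {z : H.edgeSet → ZMod 2} (hz : edgeBoundary H z = 0) :
    ∃ X, faceBoundary l r X = z := by
  obtain ⟨c, hc, X, hX⟩ := h.exists_sum_eq (fun _ ↦ z) fun _ ↦ hz
  obtain ⟨i, hi⟩ := Function.ne_iff.1 hc
  have hci : c 0 = 1 := Fin.eq_one_of_ne_zero (c 0) (Fin.fin_one_eq_zero i ▸ hi)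
  exact ⟨X, by simpa [hci] using hX⟩

lemma IsSurfaceIncidence.finrank_ker_edgeBoundary_lt [Fintype C] {l r : H.edgeSet → C}
    (h : IsSurfaceIncidence l r 0)
    (hpos : 0 < Module.finrank (ZMod 2) (LinearMap.ker (edgeBoundary H))) :
    Module.finrank (ZMod 2) (LinearMap.ker (edgeBoundary H)) <
      (Finset.univ.filter fun c ↦ faceBoundary l r (Pi.single c 1) ≠ 0).card := by
  set b : C → H.edgeSet → ZMod 2 := fun c ↦ faceBoundary l r (Pi.single c 1)
  have hspan : LinearMap.ker (edgeBoundary H) ≤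
      Submodule.span (ZMod 2) (Set.range fun c : {c // b c ≠ 0} ↦ b c) := by
    intro z hz
    obtain ⟨X, rfl⟩ := h.exists_faceBoundary_eq hz
    rw [faceBoundary_eq_sum]
    refine Submodule.sum_mem _ fun c _ ↦ Submodule.smul_mem _ _ (?_ : b c ∈ _)
    by_cases hc : b c = 0
    · rw [hc]
      exact Submodule.zero_mem _
    · exact Submodule.subset_span ⟨⟨c, hc⟩, rfl⟩
  have hsum : ∑ c : {c // b c ≠ 0}, b c = 0 := calc
    _ = ∑ c with b c ≠ 0, b c := (Finset.sum_subtype _ (by simp) _).symm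
    _ = ∑ c, b c := Finset.sum_filter_ne_zero _
    _ = faceBoundary l r 1 := by simp [faceBoundary_eq_sum l r 1, b]
    _ = 0 := ZModModule.add_self _
  have hle := Submodule.finrank_mono hspan
  have : Nonempty {c // b c ≠ 0} := by
    by_contra hempty
    rw [not_nonempty_iff] at hempty
    rw [Set.range_eq_empty, Submodule.span_empty, finrank_bot] at hle
    lia
  rw [← Fintype.card_subtype]
  exact hle.trans_lt (finrank_span_range_lt_card hsum)

lemma IsSurfaceIncidence.three_mul_finrank_ker_add_one_le [Finite C] {l r : H.edgeSet → C}
    (h : IsSurfaceIncidence l r 0)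
    (hpos : 0 < Module.finrank (ZMod 2) (LinearMap.ker (edgeBoundary H))) :
    (Module.finrank (ZMod 2) (LinearMap.ker (edgeBoundary H)) + 1) * 3 ≤
      Nat.card H.edgeSet * 2 := by
  have := Fintype.ofFinite C
  have hcount : (Finset.univ.filter fun c ↦ faceBoundary l r (Pi.single c 1) ≠ 0).card * 3 ≤
      (Finset.univ : Finset H.edgeSet).card * 2 := by
    refine Finset.card_mul_le_card_mul (fun c e ↦ faceBoundary l r (Pi.single c 1) e ≠ 0)
      (fun c hc ↦ ?_) fun e _ ↦ ?_
    · exact three_le_card_support_of_edgeBoundary_eq_zero (h.edgeBoundary_faceBoundary _)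
        (Finset.mem_filter.1 hc).2
    · refine (Finset.card_le_card fun c hc ↦ ?_).trans (Finset.card_le_two (a := l e) (b := r e))
      by_contra hcon
      simp only [Finset.mem_insert, Finset.mem_singleton, not_or] at hcon
      refine (Finset.mem_filter.1 hc).2 ?_
      rw [faceBoundary_apply, Pi.single_eq_of_ne' hcon.1, Pi.single_eq_of_ne' hcon.2, add_zero]
  rw [Nat.card_eq_fintype_card, ← Finset.card_univ]
  exact (Nat.mul_le_mul_right 3 (h.finrank_ker_edgeBoundary_lt hpos)).trans hcount

lemma cone_top {W : Type*} : cone (⊤ : SimpleGraph W) = ⊤ := by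
  ext (_ | u) (_ | v) <;> simp [cone]

lemma not_isSurfaceIncidence_cone_top_four [Finite C]
    {l r : (cone (⊤ : SimpleGraph (Fin 4))).edgeSet → C} : ¬ IsSurfaceIncidence l r 0 := by
  intro h
  have hedges : Nat.card (cone (⊤ : SimpleGraph (Fin 4))).edgeSet = 10 := by
    rw [cone_top, Nat.card_eq_fintype_card, ← edgeFinset_card,
      card_edgeFinset_top_eq_card_choose_two]
    rfl
  have hrank := card_edgeSet_lt_finrank_ker_edgeBoundary_add_card (cone (⊤ : SimpleGraph (Fin 4)))
  have hvertices : Nat.card (Option (Fin 4)) = 5 := by simp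
  have hle := h.three_mul_finrank_ker_add_one_le (by lia)
  lia

end Planarity

lemma EmbScheme.GenusLE.not_isMinor_bouquet {U : Type*} [Finite U] {H : SimpleGraph U}
    {S : EmbScheme H} {g : ℕ} (hS : S.GenusLE g) :
    ¬ IsMinor (bouquet (Fin (g + 1)) (⊤ : SimpleGraph (Fin 4))) H := by
  have := Fintype.ofFinite U
  rintro ⟨β, hβ⟩
  obtain ⟨f, hf⟩ := hβ.exists_isEdgeModel
  obtain ⟨i, hi⟩ := (hS.isSurfaceIncidence.of_isMinorModel hβ hf).exists_bouquetCopy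
  exact not_isSurfaceIncidence_cone_top_four hi

section Interval

lemma exists_mem_Icc_of_not_disjoint {α : Type*} [LinearOrder α] {I J : Set α} (hI : I.OrdConnected)
    (hJ : J.OrdConnected) {u v : α} (hu : u ∈ I) (hv : v ∈ J) (huv : u ≤ v)
    (h : ¬ Disjoint I J) : ∃ t ∈ Set.Icc u v, t ∈ I ∧ t ∈ J := by
  obtain ⟨t, htI, htJ⟩ := Set.not_disjoint_iff.1 h
  rcases le_total t u with htu | hut
  · exact ⟨u, ⟨le_rfl, huv⟩, hu, hJ.out htJ hv ⟨htu, huv⟩⟩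
  · rcases le_total t v with htv | hvt
    · exact ⟨t, ⟨hut, htv⟩, htI, htJ⟩
    · exact ⟨v, ⟨huv, le_rfl⟩, hI.out hu htI ⟨huv, hvt⟩, hv⟩

variable {N d : ℕ}

lemma exists_Icc_disjoint {D : Set (Fin N)} {L : ℕ} (hD : D.ncard ≤ d)
    (hN : (d + 1) * (L + 1) ≤ N) : ∃ x y : Fin N, (x : ℕ) + L = y ∧ ∀ j ∈ Set.Icc x y, j ∉ D := by
  have hcard : ((fun j : Fin N ↦ (j : ℕ) / (L + 1)) '' D).ncard < (Set.Iio (d + 1)).ncard :=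
    (Set.ncard_image_le).trans_lt (by rw [Set.ncard_Iio_nat]; lia)
  obtain ⟨r, hr, hrD⟩ := Set.exists_mem_notMem_of_ncard_lt_ncard hcard
  have hrN : (r + 1) * (L + 1) ≤ N := (Nat.mul_le_mul_right _ hr).trans hN
  rw [Nat.succ_mul] at hrN
  refine ⟨⟨r * (L + 1), by lia⟩, ⟨r * (L + 1) + L, by lia⟩, rfl, fun j hj hjD ↦ hrD ⟨j, hjD, ?_⟩⟩
  have hle : r * (L + 1) ≤ j := hj.1
  have hge : (j : ℕ) ≤ r * (L + 1) + L := hj.2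
  exact Nat.div_eq_of_lt_le hle (by rw [Nat.succ_mul]; lia)

variable {I : Fin N → Set (Fin N)} {x y : Fin N}

lemma exists_division_disjoint_of_short {S : ℕ} (hS : 0 < S) (hI : ∀ u, u ∈ I u)
    (hconv : ∀ u ∈ Set.Icc x y, (I u).OrdConnected)
    (hshort : ∀ u ∈ Set.Icc x y, ∀ t ∈ Set.Icc x y, t ∈ I u → (t : ℕ) ≤ u + S ∧ (u : ℕ) ≤ t + S)
    (hlen : x + d * (2 * S) ≤ y) :
    ∃ n : Fin (d + 1) → Fin N, StrictMono n ∧ ∀ i j : Fin d, (i : ℕ) + 1 < j →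
      ∀ u ∈ division n i, ∀ v ∈ division n j, Disjoint (I u) (I v) := by
  have hbound {i : ℕ} (hi : i ≤ d) : x + i * (2 * S) ≤ y :=
    (Nat.add_le_add_left (Nat.mul_le_mul_right _ hi) _).trans hlen
  refine ⟨fun i ↦ ⟨x + i * (2 * S), (hbound i.is_le).trans_lt y.2⟩, fun i j hij ↦ ?_,
    fun i j hij u hu v hv ↦ by_contra fun hdisj ↦ ?_⟩
  · exact Fin.mk_lt_mk.2 (Nat.add_lt_add_left (Nat.mul_lt_mul_of_pos_right hij (by lia)) _)
  · have hxu : (x : ℕ) + i * (2 * S) ≤ u := hu.1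
    have hui : (u : ℕ) < x + (i + 1) * (2 * S) := hu.2
    have hjv : (x : ℕ) + j * (2 * S) ≤ v := hv.1
    have hvj : (v : ℕ) < x + (j + 1) * (2 * S) := hv.2
    have hvy := hbound (i := j + 1) j.2
    have hgap := Nat.mul_le_mul_right (2 * S) (show (i : ℕ) + 1 + 1 ≤ j from hij)
    rw [Nat.succ_mul (i + 1)] at hgap
    have hfar : (u : ℕ) + 2 * S < v := by lia
    have huv : u ≤ v := Fin.le_def.2 (by lia)
    have hxu' : x ≤ u := Fin.le_def.2 ((Nat.le_add_right _ _).trans hxu)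
    have hvy' : v ≤ y := Fin.le_def.2 (hvj.le.trans hvy)
    obtain ⟨t, ⟨hut, htv⟩, htu, htv'⟩ := exists_mem_Icc_of_not_disjoint
      (hconv u ⟨hxu', huv.trans hvy'⟩) (hconv v ⟨hxu'.trans huv, hvy'⟩) (hI u) (hI v) huv hdisj
    have ht : t ∈ Set.Icc x y := ⟨hxu'.trans hut, htv.trans hvy'⟩
    have htu_le := (hshort u ⟨hxu', huv.trans hvy'⟩ t ht htu).1
    have hvt_le := (hshort v ⟨hxu'.trans huv, hvy'⟩ t ht htv').2
    lia

lemma exists_Icc_subset_of_long {J : Set (Fin N)} (hJ : J.OrdConnected) {u t : Fin N} {S : ℕ}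
    (hu : u ∈ J) (ht : t ∈ J) (hux : u ∈ Set.Icc x y) (htx : t ∈ Set.Icc x y)
    (hlong : (t : ℕ) + S < u ∨ (u : ℕ) + S < t) :
    ∃ x' y' : Fin N, x ≤ x' ∧ y' ≤ y ∧ x' + S ≤ (y' : ℕ) ∧
      ∀ v ∈ Set.Icc x' y', v ≠ u ∧ v ∈ J := by
  have hty : (t : ℕ) ≤ y := htx.2
  rcases hlong with h | h
  · refine ⟨t, ⟨t + S, by lia⟩, htx.1, Fin.le_def.2 (h.le.trans hux.2), le_rfl, fun v hv ↦ ?_⟩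
    have hvu : v < u := hv.2.trans_lt (Fin.lt_def.2 h)
    exact ⟨hvu.ne, hJ.out ht hu ⟨hv.1, hvu.le⟩⟩
  · refine ⟨⟨u + 1, by lia⟩, ⟨u + 1 + S, by lia⟩, hux.1.trans (Fin.le_def.2 (Nat.le_succ _)),
      Fin.le_def.2 (by lia), le_rfl, fun v hv ↦ ?_⟩
    have huv : u < v := (Fin.lt_def.2 (Nat.lt_succ_self _)).trans_le hv.1
    exact ⟨huv.ne', hJ.out hu ht ⟨huv.le, hv.2.trans (Fin.le_def.2 (by lia))⟩⟩

lemma exists_division_disjoint (hd : 0 < d) (hI : ∀ u, u ∈ I u) (k : ℕ)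
    (hconv : ∀ u ∈ Set.Icc x y, (I u).OrdConnected)
    (hdepth : ∀ t ∈ Set.Icc x y, {u ∈ Set.Icc x y | t ∈ I u}.ncard ≤ k)
    (hlen : x + (2 * d) ^ k ≤ y) :
    ∃ n : Fin (d + 1) → Fin N, StrictMono n ∧ ∀ i j : Fin d, (i : ℕ) + 1 < j →
      ∀ u ∈ division n i, ∀ v ∈ division n j, Disjoint (I u) (I v) := by
  induction k generalizing x y with
  | zero =>
    have hx : x ∈ Set.Icc x y := ⟨le_rfl, Fin.le_def.2 (by lia)⟩
    have hempty := (Set.ncard_eq_zero (Set.toFinite _)).1 (Nat.le_zero.1 (hdepth x hx))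
    exact absurd ⟨hx, hI x⟩ (Set.eq_empty_iff_forall_notMem.1 hempty x)
  | succ k ih =>
    set S := (2 * d) ^ k with hS
    by_cases hshort : ∀ u ∈ Set.Icc x y, ∀ t ∈ Set.Icc x y, t ∈ I u →
        (t : ℕ) ≤ u + S ∧ (u : ℕ) ≤ t + S
    · refine exists_division_disjoint_of_short (by positivity) hI hconv hshort ?_
      rw [pow_succ, ← hS] at hlen
      lia
    -- A long interval `I u` covers a window of `S + 1` points other than `u`, on which the depth
    -- drops by one once `u` is excluded.
    push Not at hshort
    obtain ⟨u, hu, t, ht, htu, hlong⟩ := hshort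
    obtain ⟨x', y', hxx', hyy', hlen', hcover⟩ :=
      exists_Icc_subset_of_long (S := S) (hconv u hu) (hI u) htu hu ht (by lia)
    refine ih (fun v hv ↦ hconv v ⟨hxx'.trans hv.1, hv.2.trans hyy'⟩) (fun t ht ↦ ?_) hlen'
    have hsub : {v ∈ Set.Icc x' y' | t ∈ I v} ⊆ {v ∈ Set.Icc x y | t ∈ I v} :=
      fun v hv ↦ ⟨⟨hxx'.trans hv.1.1, hv.1.2.trans hyy'⟩, hv.2⟩
    have hlt := Set.ncard_lt_ncard ((Set.ssubset_iff_of_subset hsub).2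
      ⟨u, ⟨hu, (hcover t ht).2⟩, fun h ↦ (hcover u h.1).1 rfl⟩)
    exact Nat.lt_succ_iff.1 (hlt.trans_le (hdepth t ⟨hxx'.trans ht.1, ht.2.trans hyy'⟩))

end Interval

section Vortex

lemma val_eq_val_add_one {M : ℕ} [NeZero M] {a b : ZMod M} (h : b = a + 1) (hb : b ≠ 0) :
    b.val = a.val + 1 := by
  have hlt : a.val + 1 < M := by
    refine (Nat.succ_le_iff.2 a.val_lt).lt_of_ne fun hM ↦ hb ?_
    rw [h, ← ZMod.natCast_zmod_val a, ← Nat.cast_succ, hM, ZMod.natCast_self]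
  rw [h, ← ZMod.natCast_zmod_val a, ← Nat.cast_succ, ZMod.val_natCast_of_lt hlt,
    ZMod.val_natCast_of_lt a.val_lt]

lemma val_le_val_add_one_of_ringGraph_adj {M : ℕ} [NeZero M] {a b : ZMod M}
    (h : (ringGraph M).Adj a b) (ha : a ≠ 0) : b.val ≤ a.val + 1 := by
  rcases eq_or_ne b 0 with rfl | hb
  · simp
  · rcases h.2 with h | h
    · exact (val_eq_val_add_one h hb).le
    · have := val_eq_val_add_one h ha
      lia

lemma natCast_zmod_comp_val_injective {M : ℕ} :
    Function.Injective fun j : Fin M ↦ ((j : ℕ) : ZMod M) :=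
  fun i j h ↦ Fin.ext <| by
    rw [← ZMod.val_natCast_of_lt i.2, ← ZMod.val_natCast_of_lt j.2]
    exact congrArg ZMod.val h

lemma ordConnected_of_connected_induce_ringGraph {M : ℕ} [NeZero M] {P : Set (ZMod M)}
    (hP : ((ringGraph M).induce P).Connected) (h0 : 0 ∉ P) :
    {x : Fin M | ((x : ℕ) : ZMod M) ∈ P}.OrdConnected := by
  have hval : ∀ x : Fin M, ((x : ℕ) : ZMod M).val = x := fun x ↦ ZMod.val_natCast_of_lt x.2
  refine ⟨fun x hx z hz y ⟨hxy, hyz⟩ ↦ by_contra fun hy ↦ ?_⟩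
  have hxy' : ((x : ℕ) : ZMod M).val < y :=
    (hval x).trans_lt (hxy.lt_of_ne fun h ↦ hy (h ▸ hx))
  have hyz' : ¬ ((z : ℕ) : ZMod M).val < y := (hval z).symm ▸ hyz.not_gt
  obtain ⟨p⟩ := hP ⟨_, hx⟩ ⟨_, hz⟩
  obtain ⟨⟨⟨a, b⟩, hab⟩, -, ha, hb⟩ := p.exists_boundary_dart {a | a.1.val < y} hxy' hyz'
  have hle : b.1.val ≤ a.1.val + 1 :=
    val_le_val_add_one_of_ringGraph_adj hab fun h ↦ h0 (h ▸ a.2)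
  have hby : b.1.val = y := (hle.trans ha).antisymm (not_lt.1 hb)
  have hyP : ((y : ℕ) : ZMod M) ∈ P := by
    rw [← hby, ZMod.natCast_zmod_val]
    exact b.2
  exact hy hyP

lemma exists_division_disjoint_of_ringGraph {M d k : ℕ} [NeZero M] (hd : 0 < d)
    {P : Fin M → Set (ZMod M)} (hP : ∀ u, ((ringGraph M).induce (P u)).Connected)
    (hmem : ∀ u : Fin M, ((u : ℕ) : ZMod M) ∈ P u) (hdepth : ∀ t, {u | t ∈ P u}.ncard ≤ k)
    (hM : (k + 1) * ((2 * d) ^ k + 1) ≤ M) :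
    ∃ n : Fin (d + 1) → Fin M, StrictMono n ∧ ∀ i j : Fin d, (i : ℕ) + 1 < j →
      ∀ u ∈ division n i, ∀ v ∈ division n j, Disjoint (P u) (P v) := by
  obtain ⟨x, y, hxy, h0⟩ := exists_Icc_disjoint (hdepth 0) hM
  obtain ⟨n, hn, hdisj⟩ := exists_division_disjoint
    (I := fun u ↦ {x : Fin M | ((x : ℕ) : ZMod M) ∈ P u}) hd hmem k
    (fun u hu ↦ ordConnected_of_connected_induce_ringGraph (hP u) (h0 u hu))
    (fun t _ ↦ (Set.ncard_le_ncard fun u hu ↦ hu.2).trans (hdepth (t : ℕ))) hxy.le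
  refine ⟨n, hn, fun i j hij u hu v hv ↦ Set.disjoint_left.2 fun t htu htv ↦ ?_⟩
  obtain ⟨x, rfl⟩ : ∃ x : Fin M, ((x : ℕ) : ZMod M) = t :=
    ⟨⟨t.val, t.val_lt⟩, ZMod.natCast_zmod_val t⟩
  exact (hdisj i j hij u hu v hv).ne_of_mem htu htv rfl

lemma blockGraph_division_le {N d : ℕ} {H H₀ : SimpleGraph (Fin N)} (hH₀ : pathGraph N ≤ H₀)
    {n : Fin (d + 1) → Fin N} (hn : StrictMono n)
    (hfar : ∀ i j : Fin d, (i : ℕ) + 1 < j → ∀ u ∈ division n i, ∀ v ∈ division n j,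
      H.Adj u v → H₀.Adj u v) :
    blockGraph H (division n) ≤ blockGraph H₀ (division n) := by
  have hlt : ∀ i j : Fin d, i < j → (blockGraph H (division n)).Adj i j →
      (blockGraph H₀ (division n)).Adj i j := fun i j hij ⟨hne, u, hu, v, hv, huv⟩ ↦ by
    rcases (Nat.succ_le_of_lt (Fin.lt_def.1 hij)).eq_or_lt with h | h
    · exact pathGraph_le_blockGraph_division hH₀ hn (pathGraph_adj.2 (.inl h))
    · exact ⟨hne, u, hu, v, hv, hfar i j h u hu v hv huv⟩
  intro i j h
  exact h.ne.lt_or_gt.elim (fun hij ↦ hlt i j hij h) fun hji ↦ (hlt j i hji h.symm).symm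

variable {V : Type*} {G : SimpleGraph V} {G₀ Gi : G.Subgraph} {M k l T : ℕ}
  {e : ZMod M → G₀.verts}

lemma IsVortex.ncard_verts_le [Finite V] [NeZero M] (hv : IsVortex Gi G₀ e k) :
    Gi.verts.ncard ≤ M * k := by
  obtain ⟨-, model, hconn, -, -, hwidth⟩ := hv
  have hcover : ⋃ t, {v | t ∈ model v} = Set.univ := Set.eq_univ_of_forall fun v ↦
    Set.mem_iUnion.2 ((hconn v).nonempty.elim fun t ↦ ⟨t, t.2⟩)
  calc Gi.verts.ncard = (⋃ t, {v | t ∈ model v}).ncard := by rw [hcover, Set.ncard_univ]; rfl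
    _ ≤ ∑ t : ZMod M, {v | t ∈ model v}.ncard := Set.ncard_iUnion_le_of_fintype _
    _ ≤ ∑ _t : ZMod M, k := Finset.sum_le_sum fun t _ ↦ hwidth t
    _ = M * k := by simp only [Finset.sum_const, Finset.card_univ, ZMod.card, smul_eq_mul]

lemma IsVortex.mem_verts (hv : IsVortex Gi G₀ e k) (x : ZMod M) : (e x : V) ∈ Gi.verts :=
  (hv.1.ge ⟨e x, ⟨x, rfl⟩, rfl⟩ : (e x : V) ∈ Gi.verts ∩ G₀.verts).1

lemma IsVortex.exists_division_not_adj [Finite V] [NeZero M] (hv : IsVortex Gi G₀ e k)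
    (he : Function.Injective e) {d : ℕ} (hd : 0 < d) (hM : (k + 1) * ((2 * d) ^ k + 1) ≤ M) :
    ∃ n : Fin (d + 1) → Fin M, StrictMono n ∧ ∀ i j : Fin d, (i : ℕ) + 1 < j →
      ∀ u ∈ division n i, ∀ v ∈ division n j, ¬ Gi.Adj (e (u : ℕ)) (e (v : ℕ)) := by
  have hGi := hv.mem_verts
  obtain ⟨-, model, hconn, hmem, hmeet, hwidth⟩ := hv
  let w : Fin M → Gi.verts := fun u ↦ ⟨e (u : ℕ), hGi _⟩
  have hinj : Function.Injective w := fun u v h ↦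
    natCast_zmod_comp_val_injective (he (Subtype.ext (congrArg (fun v : Gi.verts ↦ (v : V)) h)))
  have hdepth : ∀ t, {u | t ∈ model (w u)}.ncard ≤ k := fun t ↦
    (Set.ncard_le_ncard_of_injOn w (t := {v | t ∈ model v}) (fun u hu ↦ hu) hinj.injOn
      (Set.toFinite _)).trans (hwidth t)
  obtain ⟨n, hn, hdisj⟩ := exists_division_disjoint_of_ringGraph hd (fun u ↦ hconn (w u))
    (fun u ↦ hmem _ _ rfl) hdepth hM
  refine ⟨n, hn, fun i j hij u hu v hv huv ↦ ?_⟩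
  exact (hmeet (u := w u) (v := w v) huv).ne_empty (hdisj i j hij u hu v hv).inter_eq

lemma pathGraph_le_comap_natCast (hadj : ∀ x, G₀.coe.Adj (e x) (e (x + 1))) :
    pathGraph M ≤ G₀.coe.comap fun j : Fin M ↦ e (j : ℕ) := by
  have hsucc : ∀ i j : Fin M, (i : ℕ) + 1 = j → G₀.coe.Adj (e (i : ℕ)) (e (j : ℕ)) :=
    fun i j h ↦ by rw [← h, Nat.cast_succ]; exact hadj _
  exact fun i j h ↦ (pathGraph_adj.1 h).elim (hsucc i j) fun h ↦ (hsucc j i h).symm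

lemma IsVortex.length_lt [Finite V] [NeZero M] (hv : IsVortex Gi G₀ e k)
    (hadj : ∀ x, G₀.coe.Adj (e x) (e (x + 1))) (he : Function.Injective e)
    (hG : HereditaryDiamLT G l) (hT : HamMinorBound G₀.coe l T)
    (hGi : ∀ u ∈ Gi.verts, ∀ v ∈ Gi.verts, G.Adj u v → G₀.Adj u v ∨ Gi.Adj u v) :
    M < (k + 1) * ((2 * (T + 1)) ^ k + 1) := by
  by_contra! hM
  obtain ⟨n, hn, hfar⟩ := hv.exists_division_not_adj he T.succ_pos hM
  let q : Fin M ↪ G₀.verts := ⟨fun j ↦ e (j : ℕ), he.comp natCast_zmod_comp_val_injective⟩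
  have hH₀ : pathGraph M ≤ G₀.coe.comap q := pathGraph_le_comap_natCast hadj
  have hH : pathGraph M ≤ G.comap (q.trans (.subtype _)) := fun i j h ↦ G₀.adj_sub (hH₀ h)
  have hle : blockGraph (G.comap (q.trans (.subtype _))) (division n) ≤
      blockGraph (G₀.coe.comap q) (division n) :=
    blockGraph_division_le hH₀ hn fun i j hij u hu v hv' huv ↦
      (hGi _ (hv.mem_verts _) _ (hv.mem_verts _) huv).resolve_right (hfar i j hij u hu v hv')
  have hminor : IsMinor (blockGraph (G.comap (q.trans (.subtype _))) (division n)) G₀.coe :=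
    (isMinor_of_le hle).trans <| (isMinorModel_blockGraph_division hH₀ hn).isMinor.trans <|
      isMinor_of_injective ⟨q, id⟩ q.injective
  have hdiam := (hG.comap (q.trans (.subtype _))).of_isMinorModel_blockGraph
    (isMinorModel_blockGraph_division hH hn)
  exact (hT _ _ (pathGraph_le_blockGraph_division hH hn) hdiam hminor).not_gt T.lt_succ_self

end Vortex

section Order

variable {V : Type*} {G : SimpleGraph V}

lemma HasHamPath.nonempty (hG : HasHamPath G) : Nonempty V :=
  ⟨hG.choose⟩

lemma HasHamPath.finite (hG : HasHamPath G) : Finite V := by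
  obtain ⟨u, v, P, -, hmem⟩ := hG
  exact Set.finite_univ_iff.1 (P.support.finite_toSet.subset fun w _ ↦ hmem w)

lemma HasHamPath.exists_embedding (hG : HasHamPath G) :
    ∃ q : Fin (Nat.card V) ↪ V, pathGraph (Nat.card V) ≤ G.comap q := by
  obtain ⟨u, v, P, hP, hmem⟩ := hG
  have hinj : Function.Injective fun i : Fin (P.length + 1) ↦ P.getVert i := fun i j h ↦
    Fin.ext (hP.getVert_injOn (Nat.le_of_lt_succ i.2) (Nat.le_of_lt_succ j.2) h)
  have hsurj : Function.Surjective fun i : Fin (P.length + 1) ↦ P.getVert i := fun w ↦ by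
    obtain ⟨i, hi, hle⟩ := Walk.mem_support_iff_exists_getVert.1 (hmem w)
    exact ⟨⟨i, Nat.lt_succ_of_le hle⟩, hi⟩
  rw [← Nat.card_congr (Equiv.ofBijective _ ⟨hinj, hsurj⟩), Nat.card_fin]
  have hsucc : ∀ i j : Fin (P.length + 1), (i : ℕ) + 1 = j → G.Adj (P.getVert i) (P.getVert j) :=
    fun i j h ↦ h ▸ P.adj_getVert_succ (by lia)
  exact ⟨⟨_, hinj⟩, fun i j h ↦ (pathGraph_adj.1 h).elim (hsucc i j) fun h ↦ (hsucc j i h).symm⟩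

variable {G₀ : G.Subgraph} {A : Set V}

lemma HamMinorBound.lt_of_forall_notMem [Finite V] {N b l T : ℕ} (hT : HamMinorBound G₀.coe l T)
    (hG : HereditaryDiamLT G l) {q : Fin N ↪ V} (hq : pathGraph N ≤ G.comap q) {X : Set V}
    (hX : X.ncard ≤ b) (hverts : ∀ v ∉ X, v ∈ G₀.verts)
    (hadj : ∀ u ∉ X, ∀ v ∉ X, G.Adj u v → G₀.Adj u v) : N < (b + 1) * (T + 1) := by
  by_contra! hN
  have hD : (q ⁻¹' X).ncard ≤ b :=
    (Set.ncard_le_ncard_of_injOn q (fun _ hi ↦ hi) q.injective.injOn (Set.toFinite X)).trans hX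
  obtain ⟨x, y, hxy, hwindow⟩ := exists_Icc_disjoint hD hN
  let f : Fin (T + 1) ↪ Fin N :=
    ⟨fun i ↦ ⟨x + i, by lia⟩, fun i j h ↦ Fin.ext (Nat.add_left_cancel (Fin.mk.inj h))⟩
  have hf : ∀ i, q (f i) ∉ X := fun i ↦
    hwindow _ ⟨Fin.le_def.2 (Nat.le_add_right _ _), Fin.le_def.2 (show (x : ℕ) + i ≤ y by lia)⟩
  have hpath : pathGraph (T + 1) ≤ G.comap (f.trans q) := fun i j h ↦ hq <| pathGraph_adj.2 <|
    (pathGraph_adj.1 h).imp (fun h ↦ show (x : ℕ) + i + 1 = x + j by lia)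
      fun h ↦ show (x : ℕ) + j + 1 = x + i by lia
  let φ : G.comap (f.trans q) →g G₀.coe :=
    ⟨fun i ↦ ⟨q (f i), hverts _ (hf i)⟩, fun h ↦ hadj _ (hf _) _ (hf _) h⟩
  have hφ : Function.Injective φ := fun i j h ↦
    (f.trans q).injective (congrArg (fun v : G₀.verts ↦ (v : V)) h)
  exact (hT _ _ hpath (hG.comap _) (isMinor_of_injective φ hφ)).not_gt T.lt_succ_self

variable {ι : Type*} {Gv : ι → G.Subgraph}

lemma notMem_iff_of_sup_iSup_eq (h : G₀ ⊔ ⨆ i, Gv i = (⊤ : G.Subgraph).deleteVerts A) {v : V} :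
    v ∉ A ↔ v ∈ G₀.verts ∨ ∃ i, v ∈ (Gv i).verts := by
  have hv := congrArg (fun K : G.Subgraph ↦ v ∈ K.verts) h
  simpa using hv.symm

lemma adj_or_exists_adj_of_sup_iSup_eq
    (h : G₀ ⊔ ⨆ i, Gv i = (⊤ : G.Subgraph).deleteVerts A) {u v : V} (hu : u ∉ A) (hv : v ∉ A)
    (huv : G.Adj u v) : G₀.Adj u v ∨ ∃ i, (Gv i).Adj u v := by
  have hadj := congrArg (fun K : G.Subgraph ↦ K.Adj u v) h
  simpa [hu, hv, huv] using hadj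

lemma adj_or_adj_of_sup_iSup_eq (h : G₀ ⊔ ⨆ i, Gv i = (⊤ : G.Subgraph).deleteVerts A)
    (hdisj : ∀ i j, i ≠ j → Disjoint (Gv i).verts (Gv j).verts) {i : ι} {u v : V}
    (hu : u ∈ (Gv i).verts) (hv : v ∈ (Gv i).verts) (huv : G.Adj u v) :
    G₀.Adj u v ∨ (Gv i).Adj u v := by
  refine (adj_or_exists_adj_of_sup_iSup_eq h ((notMem_iff_of_sup_iSup_eq h).2 (.inr ⟨i, hu⟩))
    ((notMem_iff_of_sup_iSup_eq h).2 (.inr ⟨i, hv⟩)) huv).imp_right fun ⟨j, hj⟩ ↦ ?_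
  rcases eq_or_ne i j with rfl | hij
  · exact hj
  · exact ((hdisj i j hij).ne_of_mem hu ((Gv j).edge_vert hj) rfl).elim

lemma ncard_union_iUnion_le [Finite V] {s p a b : ℕ} {B : Fin s → Set V} (hA : A.ncard ≤ a)
    (hs : s ≤ p) (hB : ∀ i, (B i).ncard ≤ b) : (A ∪ ⋃ i, B i).ncard ≤ a + p * b :=
  calc (A ∪ ⋃ i, B i).ncard ≤ A.ncard + (⋃ i, B i).ncard := Set.ncard_union_le _ _
    _ ≤ a + ∑ i, (B i).ncard := Nat.add_le_add hA (Set.ncard_iUnion_le_of_fintype _)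
    _ ≤ a + ∑ _i : Fin s, b := Nat.add_le_add_left (Finset.sum_le_sum fun i _ ↦ hB i) _
    _ = a + s * b := by rw [Fin.sum_const, smul_eq_mul]
    _ ≤ a + p * b := Nat.add_le_add_left (Nat.mul_le_mul_right _ hs) _

/-- The order of a Hamiltonian minor, with induced paths of order at most `l`, of a graph of Euler
genus at most `g` is at most `surfaceBound g l`. -/
def surfaceBound (g l : ℕ) : ℕ := (2 * ((g + 1) * 8 ^ l) + 1) ^ l

/-- The cycle of a vortex of width less than `k` attached to such a graph has length at most
`vortexBound g k l`. -/
def vortexBound (g k l : ℕ) : ℕ := (k + 1) * ((2 * (surfaceBound g l + 1)) ^ k + 1)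

/-- A Hamiltonian `(g, p, a, k)`-almost-embeddable graph with induced paths of order at most `l` has
order at most `orderBound g p a k l`. -/
def orderBound (g p a k l : ℕ) : ℕ :=
  (a + p * (vortexBound g k l * k) + 1) * (surfaceBound g l + 1)

lemma AlmostEmbeddable.card_le [Finite V] {g p a k l : ℕ} (hG : AlmostEmbeddable G g p a k)
    (hham : HasHamPath G) (hl : HereditaryDiamLT G l) : Nat.card V ≤ orderBound g p a k l := by
  obtain ⟨A, hA, s, hs, G₀, Gv, hsup, hdisj, S, hS, m, e, hadj, hm, he, -, -, hv⟩ := hG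
  have hT : HamMinorBound G₀.coe l (surfaceBound g l) :=
    hamMinorBound_of_not_isMinor_bouquet hS.not_isMinor_bouquet l
  have hcard : ∀ i, (Gv i).verts.ncard ≤ vortexBound g k l * k := fun i ↦ by
    have : NeZero (m i) := ⟨by have := hm i; lia⟩
    have hlen := (hv i).length_lt (hadj i) (he i) hl hT fun u hu v hv huv ↦
      adj_or_adj_of_sup_iSup_eq hsup hdisj hu hv huv
    exact (hv i).ncard_verts_le.trans (Nat.mul_le_mul_right _ hlen.le)
  obtain ⟨q, hq⟩ := hham.exists_embedding
  refine (hT.lt_of_forall_notMem hl hq (ncard_union_iUnion_le hA hs hcard)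
    (fun v hvX ↦ ?_) fun u huX v hvX huv ↦ ?_).le
  · simp only [Set.mem_union, Set.mem_iUnion, not_or] at hvX
    exact ((notMem_iff_of_sup_iSup_eq hsup).1 hvX.1).resolve_right hvX.2
  · simp only [Set.mem_union, Set.mem_iUnion, not_or] at huX hvX
    exact (adj_or_exists_adj_of_sup_iSup_eq hsup huX.1 hvX.1 huv).resolve_right
      fun ⟨i, hi⟩ ↦ huX.2 ⟨i, (Gv i).edge_vert hi⟩

end Order

section Growth

/-- `f` grows at most like `2 ^ O(l ^ 2)`. The value at `0` is exempt, so that constants qualify. -/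
def IsExpSqBounded (f : ℕ → ℕ) : Prop := ∃ C, ∀ l, 0 < l → f l ≤ 2 ^ (C * l ^ 2)

namespace IsExpSqBounded

variable {f f' : ℕ → ℕ}

lemma const (b : ℕ) : IsExpSqBounded fun _ ↦ b := ⟨b, fun l hl ↦
  calc b ≤ 2 ^ b := Nat.lt_two_pow_self.le
    _ ≤ 2 ^ (b * l ^ 2) := Nat.pow_le_pow_right two_pos (Nat.le_mul_of_pos_right b (by positivity))⟩

lemma mul (hf : IsExpSqBounded f) (hf' : IsExpSqBounded f') :
    IsExpSqBounded fun l ↦ f l * f' l := by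
  obtain ⟨C, hC⟩ := hf
  obtain ⟨C', hC'⟩ := hf'
  refine ⟨C + C', fun l hl ↦ ?_⟩
  rw [add_mul, pow_add]
  exact Nat.mul_le_mul (hC l hl) (hC' l hl)

lemma add (hf : IsExpSqBounded f) (hf' : IsExpSqBounded f') :
    IsExpSqBounded fun l ↦ f l + f' l := by
  obtain ⟨C, hC⟩ := hf
  obtain ⟨C', hC'⟩ := hf'
  refine ⟨max C C' + 1, fun l hl ↦ ?_⟩
  have hmax : ∀ {c}, c ≤ max C C' → 2 ^ (c * l ^ 2) ≤ 2 ^ (max C C' * l ^ 2) := fun h ↦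
    Nat.pow_le_pow_right two_pos (Nat.mul_le_mul_right _ h)
  calc f l + f' l ≤ 2 ^ (max C C' * l ^ 2) + 2 ^ (max C C' * l ^ 2) := Nat.add_le_add
        ((hC l hl).trans (hmax (le_max_left C C'))) ((hC' l hl).trans (hmax (le_max_right C C')))
    _ = 2 ^ (max C C' * l ^ 2 + 1) := by ring
    _ ≤ 2 ^ ((max C C' + 1) * l ^ 2) := Nat.pow_le_pow_right two_pos <| by
        rw [add_mul, one_mul]
        exact Nat.add_le_add_left (Nat.one_le_pow _ _ hl) _

lemma pow (hf : IsExpSqBounded f) (k : ℕ) : IsExpSqBounded fun l ↦ f l ^ k := by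
  obtain ⟨C, hC⟩ := hf
  refine ⟨C * k, fun l hl ↦ ?_⟩
  rw [mul_right_comm, pow_mul]
  exact Nat.pow_le_pow_left (hC l hl) k

end IsExpSqBounded

lemma isExpSqBounded_surfaceBound (g : ℕ) : IsExpSqBounded (surfaceBound g) := by
  refine ⟨2 * g + 6, fun l hl ↦ ?_⟩
  have hbase : 2 * ((g + 1) * 8 ^ l) + 1 ≤ 2 ^ ((2 * g + 6) * l) :=
    calc 2 * ((g + 1) * 8 ^ l) + 1 ≤ 2 * ((g + 1) * 8 ^ l) + 8 ^ l :=
          Nat.add_le_add_left (Nat.one_le_pow _ _ (by norm_num)) _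
      _ = (2 * g + 3) * (2 ^ 3) ^ l := by ring
      _ ≤ 2 ^ (2 * g + 3) * (2 ^ 3) ^ l := Nat.mul_le_mul_right _ Nat.lt_two_pow_self.le
      _ = 2 ^ (2 * g + 3 + 3 * l) := by rw [pow_add _ _ (3 * l), pow_mul 2 3]
      _ ≤ 2 ^ ((2 * g + 6) * l) := Nat.pow_le_pow_right two_pos (by nlinarith)
  calc surfaceBound g l ≤ (2 ^ ((2 * g + 6) * l)) ^ l := Nat.pow_le_pow_left hbase l
    _ = 2 ^ ((2 * g + 6) * l ^ 2) := by rw [← pow_mul, mul_assoc, sq]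

lemma isExpSqBounded_vortexBound (g k : ℕ) : IsExpSqBounded (vortexBound g k) :=
  have hT := (isExpSqBounded_surfaceBound g).add (.const 1)
  .mul (.const (k + 1)) <| (((IsExpSqBounded.const 2).mul hT).pow k).add (.const 1)

lemma isExpSqBounded_orderBound (g p a k : ℕ) : IsExpSqBounded (orderBound g p a k) :=
  have hX := (IsExpSqBounded.const p).mul ((isExpSqBounded_vortexBound g k).mul (.const k))
  .mul (((IsExpSqBounded.const a).add hX).add (.const 1))
    ((isExpSqBounded_surfaceBound g).add (.const 1))

lemma logb_two_rpow_one_div_le_sqrt (n : ℕ) {k : ℕ} (hk : 2 ≤ k) :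
    logb 2 n ^ (1 / (k : ℝ)) ≤ √(logb 2 n) := by
  rcases lt_or_ge n 2 with hn | hn
  · have hlog : logb 2 n = 0 := by interval_cases n <;> simp
    rw [hlog, sqrt_zero, zero_rpow (by positivity)]
  · rw [sqrt_eq_rpow]
    refine rpow_le_rpow_of_exponent_le ?_ (one_div_le_one_div_of_le two_pos (by exact_mod_cast hk))
    rw [le_logb_iff_rpow_le one_lt_two (by positivity), rpow_one]
    exact_mod_cast hn

lemma sqrt_logb_two_le {n C l : ℕ} (hn : 0 < n) (h : n ≤ 2 ^ (C * l ^ 2)) :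
    √(logb 2 n) ≤ √C * l := by
  have hlog : logb 2 n ≤ C * (l : ℝ) ^ 2 := by
    rw [logb_le_iff_le_rpow one_lt_two (by exact_mod_cast hn)]
    exact_mod_cast h
  calc √(logb 2 n) ≤ √(C * (l : ℝ) ^ 2) := sqrt_le_sqrt hlog
    _ = √C * l := by rw [sqrt_mul C.cast_nonneg, sqrt_sq l.cast_nonneg]

end Growth

lemma HasInducedPathGE.mono {V : Type*} {G : SimpleGraph V} {r r' : ℝ} (hG : HasInducedPathGE G r)
    (h : r' ≤ r) : HasInducedPathGE G r' :=
  hG.imp fun _ hm ↦ ⟨h.trans hm.1, hm.2⟩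

theorem stmt15_general (g p a k : ℕ) :
    ∃ c : ℝ, 0 < c ∧
      ∀ {V : Type*} (G : SimpleGraph V), AlmostEmbeddable G g p a k → HasHamPath G →
        HasInducedPathGE G (c * √(logb 2 (Nat.card V))) := by
  obtain ⟨C, hC⟩ := isExpSqBounded_orderBound g p a k
  refine ⟨(√(C + 1 : ℕ))⁻¹, by positivity, fun {V} G hG hham ↦ ?_⟩
  have := hham.finite
  have := hham.nonempty
  obtain ⟨l, hl, hpath, hdiam⟩ := exists_pathGraph_embedding_hereditaryDiamLT G
  have hcard : Nat.card V ≤ 2 ^ ((C + 1) * l ^ 2) :=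
    calc Nat.card V ≤ orderBound g p a k l := hG.card_le hham hdiam
      _ ≤ 2 ^ (C * l ^ 2) := hC l hl
      _ ≤ 2 ^ ((C + 1) * l ^ 2) :=
        Nat.pow_le_pow_right two_pos (Nat.mul_le_mul_right _ C.le_succ)
  exact ⟨l, (inv_mul_le_iff₀ (by positivity)).2 (sqrt_logb_two_le Nat.card_pos hcard), hpath⟩

theorem stmt15 (g p a k : ℕ) (hk : 2 ≤ k) :
    ∃ c : ℝ, 0 < c ∧
      ∀ {V : Type} [Fintype V] (G : SimpleGraph V) (n : ℕ),
        AlmostEmbeddable G g p a k → HasHamPath G → Fintype.card V = n →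
        HasInducedPathGE G (c * Real.logb 2 n ^ ((1 : ℝ) / k)) := by
  obtain ⟨c, hc, h⟩ := stmt15_general g p a k
  exact ⟨c, hc, fun G n hG hham hn ↦ (Nat.card_eq_fintype_card.trans hn ▸ h G hG hham).mono
    (mul_le_mul_of_nonneg_left (logb_two_rpow_one_div_le_sqrt n hk) hc.le)⟩
end
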